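/- Let Ω ⊂ ℝⁿ be an open set, let k ∈ ℕ with k > 1, and let 1 ≤ p < ∞ satisfy (k−1)p < n. Suppose f ∈ W^{k,p}_loc(Ω). Then there exists a sequence of closed sets {C_l}_{l=1}^∞ with C_l ⊂ C_{l+1} ⊂ Ω for every l, such that for each l the restriction of the precise representative f* to C_l is Lipschitz continuous outside a subset of C_l of R_{k−1,p}-capacity zero, and R_{k−1,p}(Ω \ ⋃_{l=1}^∞ C_l) = 0. -/

import Mathlib

open MeasureTheory Filter Metric Set
open scoped ENNReal NNReal Topology

noncomputable section

abbrev Euc (n : ℕ) := EuclideanSpace ℝ (Fin n)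

/-- Degree of a multi-index. -/
def mdeg {n : ℕ} (α : Fin n → ℕ) : ℕ := ∑ i, α i

/-- Iterated partial derivative along a list of coordinate directions. -/
def listDeriv {n : ℕ} : List (Fin n) → (Euc n → ℝ) → (Euc n → ℝ)
  | [], η => η
  | i :: l, η => fun x => fderiv ℝ (listDeriv l η) x (EuclideanSpace.single i 1)

/-- The partial derivative `D^α η` associated to a multi-index `α`. -/
def mderiv {n : ℕ} (α : Fin n → ℕ) (η : Euc n → ℝ) : Euc n → ℝ :=
  listDeriv ((List.finRange n).flatMap fun i => List.replicate (α i) i) η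

/-- `g` is the weak derivative `D^α f` on `ℝⁿ`. -/
def IsWeakDeriv {n : ℕ} (α : Fin n → ℕ) (f g : Euc n → ℝ) : Prop :=
  ∀ η : Euc n → ℝ, ContDiff ℝ (⊤ : ℕ∞) η → HasCompactSupport η →
    ∫ x, f x * mderiv α η x = (-1 : ℝ) ^ mdeg α * ∫ x, g x * η x

/-- `g` is the weak derivative `D^α f` on an open set `U`. -/
def IsWeakDerivOn {n : ℕ} (U : Set (Euc n)) (α : Fin n → ℕ) (f g : Euc n → ℝ) : Prop :=
  ∀ η : Euc n → ℝ, ContDiff ℝ (⊤ : ℕ∞) η → HasCompactSupport η → tsupport η ⊆ U →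
    ∫ x in U, f x * mderiv α η x = (-1 : ℝ) ^ mdeg α * ∫ x in U, g x * η x

/-- Membership in the Sobolev space `W^{k,p}(U)`. -/
def MemSobolevOn {n : ℕ} (k : ℕ) (p : ℝ) (U : Set (Euc n)) (f : Euc n → ℝ) : Prop :=
  MemLp f (ENNReal.ofReal p) (volume.restrict U) ∧
  ∀ α : Fin n → ℕ, mdeg α ≤ k → ∃ g : Euc n → ℝ,
    MemLp g (ENNReal.ofReal p) (volume.restrict U) ∧ IsWeakDerivOn U α f g

/-- Membership in the local Sobolev space `W^{k,p}_loc(Ω)`. -/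
def MemSobolevLoc {n : ℕ} (k : ℕ) (p : ℝ) (Ω : Set (Euc n)) (f : Euc n → ℝ) : Prop :=
  ∀ U : Set (Euc n), IsOpen U → Bornology.IsBounded U → closure U ⊆ Ω →
    MemSobolevOn k p U f

/-- The normalizing constant `γ(a)` of the Riesz kernel. -/
def rieszGamma (n : ℕ) (a : ℝ) : ℝ :=
  Real.pi ^ ((n : ℝ) / 2) * (2 : ℝ) ^ a * Real.Gamma (a / 2) / Real.Gamma (((n : ℝ) - a) / 2)

/-- The Riesz potential `I_a * g`, valued in `ℝ≥0∞`. -/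
def rieszPot {n : ℕ} (a : ℝ) (g : Euc n → ℝ) (x : Euc n) : ℝ≥0∞ :=
  (ENNReal.ofReal (rieszGamma n a))⁻¹ *
    ∫⁻ y, ENNReal.ofReal (g y) * ENNReal.ofReal (‖x - y‖ ^ (a - (n : ℝ)))

/-- The Riesz capacity `R_{a,p}`. -/
def rieszCap {n : ℕ} (a p : ℝ) (S : Set (Euc n)) : ℝ≥0∞ :=
  ⨅ (g : Euc n → ℝ) (_ : MemLp g (ENNReal.ofReal p) volume ∧ (∀ x, 0 ≤ g x) ∧
      ∀ x ∈ S, 1 ≤ rieszPot a g x),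
    ∫⁻ y, ENNReal.ofReal (g y) ^ p

/-- The precise representative of a (vector-valued) locally integrable function. -/
def preciseRepV {n : ℕ} {F : Type*} [NormedAddCommGroup F] [NormedSpace ℝ F]
    (f : Euc n → F) (x : Euc n) : F :=
  letI := Classical.propDecidable
  if h : ∃ L : F, Tendsto (fun ε : ℝ => ⨍ y in ball x ε, f y) (𝓝[>] (0:ℝ)) (𝓝 L)
  then h.choose else 0

/-- The precise representative of a real-valued locally integrable function. -/
def preciseRep {n : ℕ} (f : Euc n → ℝ) (x : Euc n) : ℝ := preciseRepV f x

/-- The Hardy–Littlewood maximal function (of an `ℝ≥0∞`-valued integrand). -/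
def maxFn {n : ℕ} (g : Euc n → ℝ≥0∞) (x : Euc n) : ℝ≥0∞ :=
  ⨆ (r : ℝ) (_ : 0 < r), (volume (ball x r))⁻¹ * ∫⁻ y in ball x r, g y

/-- `x` is a density point of `S`. -/
def DensityPt {n : ℕ} (S : Set (Euc n)) (x : Euc n) : Prop :=
  Tendsto (fun r : ℝ => volume (S ∩ ball x r) / volume (ball x r)) (𝓝[>] (0:ℝ)) (𝓝 1)

/-- `L` is the approximate differential of `φ` at `x₀`, relative to the domain `A`. -/
def HasApproxDerivAt {n : ℕ} (A : Set (Euc n)) (φ : Euc n → Euc n)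
    (L : Euc n →L[ℝ] Euc n) (x₀ : Euc n) : Prop :=
  DensityPt A x₀ ∧ ∀ ε : ℝ, 0 < ε →
    DensityPt {x | x ∈ A ∧ ‖φ x - φ x₀ - L (x - x₀)‖ ≤ ε * ‖x - x₀‖} x₀

end

/-!
Write `I_a` for the Riesz potential of order `a = k - 1`. For smooth compactly supported `u`,
iterating a radial Hardy inequality gives `|∇u| ≤ C I_a |∇ᵏ u|` pointwise. A Riesz potential is an
`A₁` weight: its average over a ball is at most a constant times its value at the center. Hence
Poincaré's inequality turns any bound `|∇u| ≤ I_a H` into a pointwise one,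
`|u x - u y| ≤ M |x - y| (I_a H x + I_a H y)`, with `M` depending only on `n` and `a`.
Apply this to a cutoff of `f` convolved with mollifiers, `H` being a common majorant of the weak
derivatives of `f` of order at most `k`; by the `A₁` property the constant does not degenerate with
the mollification, and the inequality passes to `f` almost everywhere. Averaging it over small balls
shows that `f*` exists and is Lipschitz on the part of a compact set where `I_a H ≤ N`.

One function `h ∈ L^p` dominates, up to constants, the majorants on all sets of a compact exhaustion
`K_l` of `Ω`. With `C_l = K_l ∩ {I_a |h| ≤ l}`, which is closed by lower semicontinuity, the
exceptional set `Ω \ ⋃ C_l` lies in `{I_a |h| = ∞}`, a set of zero capacity since every multiple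
`ε |h|` is admissible for it.
-/

open Module
open scoped Convolution ContDiff Nat

noncomputable section

lemma laverage_lintegral_swap {α β : Type*} [MeasurableSpace α] [MeasurableSpace β]
    {μ : Measure α} [SFinite μ] {ν : Measure β} [SFinite ν] {F : α → β → ℝ≥0∞}
    (hF : Measurable (Function.uncurry F)) (s : Set α) :
    ⨍⁻ x in s, ∫⁻ y, F x y ∂ν ∂μ = ∫⁻ y, ⨍⁻ x in s, F x y ∂μ ∂ν := by
  simp only [setLAverage_eq', lintegral_smul_measure, smul_eq_mul]
  rw [lintegral_lintegral_swap hF.aemeasurable]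
  exact (lintegral_const_mul _ hF.lintegral_prod_left').symm

lemma laverage_const_mul {α : Type*} [MeasurableSpace α] {μ : Measure α} {g : α → ℝ≥0∞}
    (hg : Measurable g) (c : ℝ≥0∞) : ⨍⁻ x, c * g x ∂μ = c * ⨍⁻ x, g x ∂μ := by
  rw [laverage_eq', laverage_eq', lintegral_const_mul c hg]

section HaarBalls

variable {E : Type*} [NormedAddCommGroup E] [NormedSpace ℝ E] [FiniteDimensional ℝ E]
  [MeasurableSpace E] [BorelSpace E] (μ : Measure E) [μ.IsAddHaarMeasure]

lemma lintegral_comp_smul_addHaar (g : E → ℝ≥0∞) {r : ℝ} (hr : 0 < r) :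
    ∫⁻ z, g (r • z) ∂μ = (ENNReal.ofReal r ^ finrank ℝ E)⁻¹ * ∫⁻ z, g z ∂μ := by
  have hemb : MeasurableEmbedding (fun z : E => r • z) :=
    (Homeomorph.smulOfNeZero r hr.ne').measurableEmbedding
  rw [← hemb.lintegral_map g, Measure.map_addHaar_smul μ hr.ne', lintegral_smul_measure,
    abs_of_pos (by positivity), ENNReal.ofReal_inv_of_pos (by positivity),
    ENNReal.ofReal_pow hr.le, smul_eq_mul]

lemma laverage_ball_mul (g : E → ℝ≥0∞) (x : E) {r : ℝ} (hr : 0 < r) (s : ℝ) :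
    ⨍⁻ y in ball x (r * s), g y ∂μ = ⨍⁻ z in ball (0 : E) s, g (x + r • z) ∂μ := by
  have hpre : (fun z => x + r • z) ⁻¹' ball x (r * s) = ball 0 s := by
    ext z
    simp [norm_smul, abs_of_pos hr, hr]
  have hind (z : E) : (ball x (r * s)).indicator g (x + r • z)
      = (ball (0 : E) s).indicator (fun z => g (x + r • z)) z := by
    rw [← hpre]
    exact (indicator_comp_right fun z => x + r • z).symm
  have hint := lintegral_comp_smul_addHaar μ (fun z => (ball x (r * s)).indicator g (x + z)) hr
  rw [lintegral_congr hind, lintegral_add_left_eq_self (fun z => (ball x (r * s)).indicator g z) x,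
    lintegral_indicator measurableSet_ball, lintegral_indicator measurableSet_ball] at hint
  rw [setLAverage_eq, setLAverage_eq, hint, Measure.addHaar_ball_mul_of_pos μ x hr,
    ENNReal.ofReal_pow hr.le, ENNReal.div_eq_inv_mul, ENNReal.div_eq_inv_mul,
    ENNReal.mul_inv (.inr measure_ball_lt_top.ne) (.inl (by finiteness))]
  ring

lemma laverage_ball_eq_laverage_ball_zero (g : E → ℝ≥0∞) (x : E) (r : ℝ) :
    ⨍⁻ y in ball x r, g y ∂μ = ⨍⁻ z in ball (0 : E) r, g (x + z) ∂μ := by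
  simpa using laverage_ball_mul μ g x one_pos r

lemma laverage_ball_comp_sub (g : E → ℝ≥0∞) (x y : E) (r : ℝ) :
    ⨍⁻ z in ball x r, g (z - y) ∂μ = ⨍⁻ z in ball (x - y) r, g z ∂μ := by
  rw [laverage_ball_eq_laverage_ball_zero, laverage_ball_eq_laverage_ball_zero μ _ (x - y)]
  simp only [add_sub_right_comm]

lemma laverage_ball_le_of_subset (g : E → ℝ≥0∞) {x y : E} {c r : ℝ} (hc : 0 < c)
    (h : ball y r ⊆ ball x (c * r)) :
    ⨍⁻ z in ball y r, g z ∂μ ≤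
      ENNReal.ofReal c ^ finrank ℝ E * ⨍⁻ z in ball x (c * r), g z ∂μ := by
  have hvol : μ (ball x (c * r)) = ENNReal.ofReal c ^ finrank ℝ E * μ (ball y r) := by
    rw [Measure.addHaar_ball_mul_of_pos μ x hc, ENNReal.ofReal_pow hc.le,
      Measure.addHaar_ball_center μ y]
  have hc0 : ENNReal.ofReal c ^ finrank ℝ E ≠ 0 := by simp [hc]
  rw [setLAverage_eq, setLAverage_eq, hvol, ← mul_div_assoc,
    ENNReal.mul_div_mul_left _ _ hc0 (by finiteness)]
  gcongr

end HaarBalls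

section RieszKernel

variable {E : Type*} [NormedAddCommGroup E] [NormedSpace ℝ E]

/-- The Riesz kernel `|z| ^ (a - n)` on an `n`-dimensional space, without its normalizing
constant. For `a < n` its value at the origin is `∞`, in contrast to the real power used
in `rieszPot`. -/
def rieszKernel (a : ℝ) (z : E) : ℝ≥0∞ := ‖z‖ₑ ^ (a - finrank ℝ E)

lemma continuous_rieszKernel (a : ℝ) : Continuous (rieszKernel a : E → ℝ≥0∞) :=
  ENNReal.continuous_rpow_const.comp continuous_enorm

lemma rieszKernel_sub_comm (a : ℝ) (z w : E) : rieszKernel a (z - w) = rieszKernel a (w - z) := by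
  rw [rieszKernel, enorm_sub_rev, ← rieszKernel]

lemma rieszKernel_smul (a : ℝ) {t : ℝ} (ht : 0 < t) (z : E) :
    rieszKernel a (t • z) = ENNReal.ofReal t ^ (a - finrank ℝ E) * rieszKernel a z := by
  rw [rieszKernel, enorm_smul, ENNReal.mul_rpow_of_ne_top (by simp) (by simp),
    Real.enorm_of_nonneg ht.le, rieszKernel]

lemma rieszKernel_mul_enorm (a : ℝ) {w : E} (hw : w ≠ 0) :
    rieszKernel a w * ‖w‖ₑ = rieszKernel (a + 1) w := by
  rw [rieszKernel, rieszKernel, add_sub_right_comm,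
    ENNReal.rpow_add _ _ (by simpa using hw) (by simp), ENNReal.rpow_one]

lemma ennreal_rpow_le_rpow_of_nonpos {x y : ℝ≥0∞} (h : x ≤ y) {b : ℝ} (hb : b ≤ 0) :
    y ^ b ≤ x ^ b := by
  have := ENNReal.rpow_le_rpow h (neg_nonneg.2 hb)
  rwa [ENNReal.rpow_neg, ENNReal.rpow_neg, ENNReal.inv_le_inv] at this

lemma rieszKernel_le_of_norm_le {a : ℝ} (ha : a ≤ finrank ℝ E) {z w : E} (h : ‖z‖ ≤ ‖w‖) :
    rieszKernel a w ≤ rieszKernel a z :=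
  ennreal_rpow_le_rpow_of_nonpos (enorm_le_iff_norm_le.2 h) (sub_nonpos.2 ha)

variable [MeasurableSpace E] [BorelSpace E]

@[fun_prop]
lemma measurable_rieszKernel (a : ℝ) : Measurable (rieszKernel a : E → ℝ≥0∞) :=
  (continuous_rieszKernel a).measurable

variable [FiniteDimensional ℝ E] (μ : Measure E) [μ.IsAddHaarMeasure]

lemma rieszKernel_eq_ofReal_ae [Nontrivial E] (a : ℝ) :
    ∀ᵐ z ∂μ, rieszKernel a z = ENNReal.ofReal (‖z‖ ^ (a - finrank ℝ E)) := by
  filter_upwards [Measure.ae_ne μ 0] with z hz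
  rw [rieszKernel, ← ofReal_norm, ENNReal.ofReal_rpow_of_pos (norm_pos_iff.2 hz)]

lemma setLIntegral_ball_rieszKernel_lt_top [Nontrivial E] {a : ℝ} (ha : 0 < a) (R : ℝ) :
    ∫⁻ z in ball (0 : E) R, rieszKernel a z ∂μ < ⊤ := by
  have hint : IntegrableOn (fun z : E => ‖z‖ ^ (a - finrank ℝ E)) (ball 0 R) μ := by
    refine integrableOn_ball_of_norm_le_rpow (C := 1) (α := finrank ℝ E - a)
      finrank_pos (by linarith) (.of_forall fun x => ?_)
      (measurable_norm.pow_const _).aestronglyMeasurable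
    rw [Real.norm_of_nonneg (by positivity), one_mul, neg_sub]
  refine lt_of_eq_of_lt (setLIntegral_congr_fun_ae measurableSet_ball ?_) hint.2
  filter_upwards [rieszKernel_eq_ofReal_ae μ a] with z hz _
  rw [hz, Real.enorm_of_nonneg (by positivity)]

end RieszKernel

section A1Weight

variable {E : Type*} [NormedAddCommGroup E] [MeasurableSpace E]

/-- `P` is a Muckenhoupt `A₁` weight with constant `A`: its mean over a ball is at most `A`
times its value at the centre. -/
structure IsA1Weight (μ : Measure E) (A : ℝ≥0) (P : E → ℝ≥0∞) : Prop where
  measurable : Measurable P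
  laverage_ball_le (x : E) {r : ℝ} (hr : 0 < r) : ⨍⁻ y in ball x r, P y ∂μ ≤ A * P x

lemma IsA1Weight.const_mul {μ : Measure E} {A : ℝ≥0} {P : E → ℝ≥0∞} (hP : IsA1Weight μ A P)
    (c : ℝ≥0∞) : IsA1Weight μ A (fun x => c * P x) where
  measurable := hP.measurable.const_mul c
  laverage_ball_le x r hr := by
    rw [laverage_const_mul hP.measurable, mul_left_comm]
    gcongr
    exact hP.laverage_ball_le x hr

variable [BorelSpace E] [NormedSpace ℝ E] [FiniteDimensional ℝ E] (μ : Measure E)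
  [μ.IsAddHaarMeasure]

lemma laverage_ball_rieszKernel_le_of_le_norm {a : ℝ} (ha : a ≤ finrank ℝ E) {x : E} {r : ℝ}
    (hr : 0 < r) (hxr : 2 * r ≤ ‖x‖) :
    ⨍⁻ y in ball x r, rieszKernel a y ∂μ ≤ rieszKernel a ((1 / 2 : ℝ) • x) := by
  have hle : ∀ y ∈ ball x r, rieszKernel a y ≤ rieszKernel a ((1 / 2 : ℝ) • x) := by
    intro y hy
    apply rieszKernel_le_of_norm_le ha
    have hyx : ‖y - x‖ < r := mem_ball_iff_norm.1 hy
    have := norm_sub_norm_le x y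
    rw [norm_sub_rev] at this
    rw [norm_smul, Real.norm_of_nonneg (by norm_num)]
    linarith
  refine (laverage_mono_ae (ae_restrict_of_forall_mem measurableSet_ball hle)).trans_eq ?_
  exact setLAverage_const (measure_ball_pos μ x hr).ne' measure_ball_lt_top.ne _

lemma laverage_ball_rieszKernel_le_of_norm_le {a : ℝ} (ha : a ≤ finrank ℝ E) {x : E} {r : ℝ}
    (hr : 0 < r) (hxr : ‖x‖ ≤ 2 * r) :
    ⨍⁻ y in ball x r, rieszKernel a y ∂μ ≤ ENNReal.ofReal 3 ^ finrank ℝ E *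
      (⨍⁻ z in ball (0 : E) 3, rieszKernel a z ∂μ) * rieszKernel a ((1 / 2 : ℝ) • x) := by
  have hsub : ball x r ⊆ ball (0 : E) (3 * r) :=
    ball_subset_ball' (by rw [dist_zero_right]; linarith)
  have hscale : ⨍⁻ z in ball (0 : E) (3 * r), rieszKernel a z ∂μ =
      ENNReal.ofReal r ^ (a - finrank ℝ E) * ⨍⁻ z in ball (0 : E) 3, rieszKernel a z ∂μ := by
    rw [mul_comm, laverage_ball_mul μ _ _ hr]
    simp only [zero_add, rieszKernel_smul a hr]
    exact laverage_const_mul (measurable_rieszKernel a) _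
  have hpow : ENNReal.ofReal r ^ (a - finrank ℝ E) ≤ rieszKernel a ((1 / 2 : ℝ) • x) := by
    refine ennreal_rpow_le_rpow_of_nonpos ?_ (sub_nonpos.2 ha)
    rw [← ofReal_norm, norm_smul, Real.norm_of_nonneg (by norm_num)]
    exact ENNReal.ofReal_le_ofReal (by linarith)
  refine (laverage_ball_le_of_subset μ _ three_pos hsub).trans ?_
  rw [hscale, mul_assoc, mul_comm (ENNReal.ofReal r ^ _)]
  gcongr

lemma exists_isA1Weight_rieszKernel [Nontrivial E] {a : ℝ} (ha : 0 < a) (han : a ≤ finrank ℝ E) :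
    ∃ A : ℝ≥0, IsA1Weight μ A (rieszKernel a) := by
  set c : ℝ≥0∞ := ENNReal.ofReal (1 / 2) ^ (a - finrank ℝ E)
  have hc : c ≠ ⊤ := by finiteness
  set J := ENNReal.ofReal 3 ^ finrank ℝ E * ⨍⁻ z in ball (0 : E) 3, rieszKernel a z ∂μ
  have hJ : J ≠ ⊤ :=
    ENNReal.mul_ne_top (by finiteness)
      (setLAverage_lt_top (setLIntegral_ball_rieszKernel_lt_top μ ha 3).ne).ne
  refine ⟨((1 + J) * c).toNNReal, measurable_rieszKernel a, fun x r hr => ?_⟩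
  rw [ENNReal.coe_toNNReal (by finiteness), mul_assoc, ← rieszKernel_smul a (by norm_num)]
  rcases le_total (2 * r) ‖x‖ with hxr | hxr
  · refine (laverage_ball_rieszKernel_le_of_le_norm μ han hr hxr).trans ?_
    exact le_mul_of_one_le_left' le_self_add
  · refine (laverage_ball_rieszKernel_le_of_norm_le μ han hr hxr).trans ?_
    gcongr
    exact le_add_self

end A1Weight

section RieszPotential

variable {E : Type*} [NormedAddCommGroup E] [NormedSpace ℝ E] [MeasurableSpace E]

/-- The Riesz potential of order `a` of `H`, formed with the kernel `rieszKernel` and hence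
without the normalizing constant of `rieszPot`. -/
def rieszPotential (μ : Measure E) (a : ℝ) (H : E → ℝ≥0∞) (x : E) : ℝ≥0∞ :=
  ∫⁻ y, H y * rieszKernel a (x - y) ∂μ

lemma rieszPotential_mono_ae {μ : Measure E} (a : ℝ) {H H' : E → ℝ≥0∞} (h : H ≤ᵐ[μ] H') (x : E) :
    rieszPotential μ a H x ≤ rieszPotential μ a H' x := by
  refine lintegral_mono_ae ?_
  filter_upwards [h] with y hy
  gcongr

lemma rieszPotential_const_mul {μ : Measure E} (a : ℝ) (c : ℝ≥0) (H : E → ℝ≥0∞) (x : E) :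
    rieszPotential μ a (fun y => c * H y) x = c * rieszPotential μ a H x := by
  simp only [rieszPotential, mul_assoc]
  exact lintegral_const_mul' _ _ ENNReal.coe_ne_top

variable [BorelSpace E]

lemma isClosed_rieszPotential_le (μ : Measure E) (a : ℝ) {H : E → ℝ≥0∞} (hH : Measurable H)
    (hH_top : ∀ y, H y ≠ ⊤) (c : ℝ≥0∞) : IsClosed {x | rieszPotential μ a H x ≤ c} := by
  refine IsSeqClosed.isClosed fun u x hu hx => ?_
  have hlim (y : E) : Tendsto (fun j => H y * rieszKernel a (u j - y)) atTop
      (𝓝 (H y * rieszKernel a (x - y))) :=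
    ENNReal.Tendsto.const_mul
      (((continuous_rieszKernel a).tendsto _).comp (hx.sub_const y)) (.inr (hH_top y))
  calc rieszPotential μ a H x
      = ∫⁻ y, liminf (fun j => H y * rieszKernel a (u j - y)) atTop ∂μ :=
        lintegral_congr fun y => (hlim y).liminf_eq.symm
    _ ≤ liminf (fun j => rieszPotential μ a H (u j)) atTop :=
        lintegral_liminf_le fun j => hH.mul ((measurable_rieszKernel a).comp (by fun_prop))
    _ ≤ c := liminf_le_of_frequently_le' (Frequently.of_forall hu)

lemma rieszPotential_eq_lintegral_add (μ : Measure E) [μ.IsAddHaarMeasure] (a : ℝ) (H : E → ℝ≥0∞)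
    (x : E) : rieszPotential μ a H x = ∫⁻ w, H (x + w) * rieszKernel a w ∂μ := by
  rw [rieszPotential, ← lintegral_add_left_eq_self _ x]
  simp only [rieszKernel_sub_comm a x, add_sub_cancel_left]

variable [FiniteDimensional ℝ E]

lemma measurable_mul_rieszKernel_sub (a : ℝ) {H : E → ℝ≥0∞} (hH : Measurable H) :
    Measurable fun q : E × E => H q.2 * rieszKernel a (q.1 - q.2) :=
  (hH.comp measurable_snd).mul ((measurable_rieszKernel a).comp (by fun_prop))

lemma measurable_rieszPotential (μ : Measure E) [SFinite μ] (a : ℝ) {H : E → ℝ≥0∞}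
    (hH : Measurable H) : Measurable (rieszPotential μ a H) :=
  (measurable_mul_rieszKernel_sub a hH).lintegral_prod_right'

variable (μ : Measure E) [μ.IsAddHaarMeasure]

lemma laverage_ball_rieszPotential (a : ℝ) {H : E → ℝ≥0∞} (hH : Measurable H) (x : E) (r : ℝ) :
    ⨍⁻ z in ball x r, rieszPotential μ a H z ∂μ
      = ∫⁻ y, H y * ⨍⁻ z in ball (x - y) r, rieszKernel a z ∂μ ∂μ := by
  simp only [rieszPotential]
  rw [laverage_lintegral_swap (measurable_mul_rieszKernel_sub a hH)]
  congr with y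
  have hmeas : Measurable fun z => rieszKernel a (z - y) :=
    (measurable_rieszKernel a).comp (by fun_prop)
  rw [laverage_const_mul hmeas, laverage_ball_comp_sub μ (rieszKernel a) x y]

lemma rieszPotential_laverage_ball (a : ℝ) {H : E → ℝ≥0∞} (hH : Measurable H) (x : E) (r : ℝ) :
    rieszPotential μ a (fun y => ⨍⁻ w in ball y r, H w ∂μ) x
      = ⨍⁻ z in ball x r, rieszPotential μ a H z ∂μ := by
  have hmeas : Measurable fun q : E × E => H (q.2 + q.1) * rieszKernel a (x - q.2) :=
    (hH.comp (by fun_prop)).mul ((measurable_rieszKernel a).comp (by fun_prop))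
  calc rieszPotential μ a (fun y => ⨍⁻ w in ball y r, H w ∂μ) x
      = ∫⁻ y, ⨍⁻ z in ball 0 r, H (y + z) * rieszKernel a (x - y) ∂μ ∂μ := by
        refine lintegral_congr fun y => ?_
        simp only [laverage_ball_eq_laverage_ball_zero μ H y, mul_comm _ (rieszKernel a (x - y))]
        exact (laverage_const_mul (hH.comp (by fun_prop)) _).symm
    _ = ⨍⁻ z in ball 0 r, ∫⁻ y, H (y + z) * rieszKernel a (x - y) ∂μ ∂μ :=
        (laverage_lintegral_swap hmeas _).symm
    _ = ⨍⁻ z in ball 0 r, rieszPotential μ a H (x + z) ∂μ := by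
        congr with z
        rw [rieszPotential,
          ← lintegral_add_right_eq_self (fun y => H y * rieszKernel a (x + z - y)) z]
        simp only [add_sub_add_right_eq_sub]
    _ = ⨍⁻ z in ball x r, rieszPotential μ a H z ∂μ :=
        (laverage_ball_eq_laverage_ball_zero μ _ x r).symm

lemma exists_isA1Weight_rieszPotential [Nontrivial E] {a : ℝ} (ha : 0 < a)
    (han : a ≤ finrank ℝ E) :
    ∃ A : ℝ≥0, ∀ H : E → ℝ≥0∞, Measurable H → IsA1Weight μ A (rieszPotential μ a H) := by
  obtain ⟨A, hA⟩ := exists_isA1Weight_rieszKernel μ ha han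
  refine ⟨A, fun H hH => ⟨measurable_rieszPotential μ a hH, fun x r hr => ?_⟩⟩
  rw [laverage_ball_rieszPotential μ a hH, rieszPotential,
    ← lintegral_const_mul' _ _ ENNReal.coe_ne_top]
  refine lintegral_mono fun y => ?_
  rw [mul_left_comm]
  gcongr
  exact hA.laverage_ball_le (x - y) hr

end RieszPotential

section HardyInequality

variable {E : Type*} [NormedAddCommGroup E] [NormedSpace ℝ E]
  {G : Type*} [NormedAddCommGroup G] [NormedSpace ℝ G] {F : E → G}

lemma enorm_deriv_comp_smul_add_le (hF : Differentiable ℝ F) (x w : E) (t : ℝ) :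
    ‖deriv (fun t : ℝ => F (x + t • w)) t‖ₑ ≤ ‖fderiv ℝ F (x + t • w)‖ₑ * ‖w‖ₑ := by
  have hline : HasDerivAt (fun t : ℝ => x + t • w) w t := by
    simpa using ((hasDerivAt_id t).smul_const w).const_add x
  have hcomp : HasDerivAt (fun t : ℝ => F (x + t • w)) (fderiv ℝ F (x + t • w) w) t :=
    (hF (x + t • w)).hasFDerivAt.comp_hasDerivAt t hline
  rw [hcomp.deriv]
  exact ContinuousLinearMap.le_opENorm _ _

lemma enorm_le_lintegral_Ioi_fderiv (hF : ContDiff ℝ 1 F) (hFc : HasCompactSupport F)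
    (x : E) {w : E} (hw : w ≠ 0) (s : ℝ) :
    ‖F (x + s • w)‖ₑ ≤ ∫⁻ t in Ioi s, ‖fderiv ℝ F (x + t • w)‖ₑ * ‖w‖ₑ := by
  have hemb : Topology.IsClosedEmbedding fun t : ℝ => x + t • -w :=
    (Homeomorph.addLeft x).isClosedEmbedding.comp
      (isClosedEmbedding_smul_left (𝕜 := ℝ) (neg_ne_zero.2 hw))
  have h := (hFc.comp_isClosedEmbedding hemb).enorm_le_lintegral_Ici_deriv
    (hF.comp (by fun_prop)) (-s)
  rw [Function.comp_apply, neg_smul_neg] at h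
  calc ‖F (x + s • w)‖ₑ
      ≤ ∫⁻ t in Iic (-s), ‖fderiv ℝ F (x + t • -w)‖ₑ * ‖-w‖ₑ :=
        h.trans <| lintegral_mono fun t =>
          enorm_deriv_comp_smul_add_le (hF.differentiable one_ne_zero) x (-w) t
    _ = ∫⁻ t in Ioi s, ‖fderiv ℝ F (x + t • w)‖ₑ * ‖w‖ₑ := by
        rw [restrict_Ioi_eq_restrict_Ici, ← (Measure.measurePreserving_neg volume)
          |>.setLIntegral_comp_preimage_emb (Homeomorph.neg ℝ).measurableEmbedding]
        simp [smul_neg]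

lemma lintegral_Ioi_ofReal_rpow_neg {c b : ℝ} (hc : 0 < c) (hb : 0 < b) :
    ∫⁻ t in Ioi c, ENNReal.ofReal t ^ (-(b + 1)) =
      (ENNReal.ofReal b)⁻¹ * ENNReal.ofReal c ^ (-b) := by
  have hexp : -(b + 1) < -1 := by linarith
  have hint : ∫ t in Ioi c, t ^ (-(b + 1)) = b⁻¹ * c ^ (-b) := by
    rw [integral_Ioi_rpow_of_lt hexp hc, show -(b + 1) + 1 = -b by ring]
    field_simp
  calc ∫⁻ t in Ioi c, ENNReal.ofReal t ^ (-(b + 1))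
      = ∫⁻ t in Ioi c, ENNReal.ofReal (t ^ (-(b + 1))) :=
        setLIntegral_congr_fun measurableSet_Ioi fun t ht =>
          ENNReal.ofReal_rpow_of_pos (hc.trans ht)
    _ = ENNReal.ofReal (b⁻¹ * c ^ (-b)) := by
        rw [← hint, ofReal_integral_eq_lintegral_ofReal (integrableOn_Ioi_rpow_of_lt hexp hc)]
        filter_upwards [self_mem_ae_restrict measurableSet_Ioi] with t ht
        exact Real.rpow_nonneg (hc.trans ht).le _
    _ = _ := by
        rw [ENNReal.ofReal_mul (by positivity), ENNReal.ofReal_inv_of_pos hb,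
          ENNReal.ofReal_rpow_of_pos hc]

lemma lintegral_Ioi_rpow_neg_mul_rieszKernel {a : ℝ} (ha : 0 < a) (w : E) :
    ∫⁻ t in Ioi (1 : ℝ), ENNReal.ofReal t ^ (-(finrank ℝ E + 1 : ℝ)) * rieszKernel a (t⁻¹ • w)
      = (ENNReal.ofReal a)⁻¹ * rieszKernel a w := by
  have htail := lintegral_Ioi_ofReal_rpow_neg one_pos ha
  rw [ENNReal.ofReal_one, ENNReal.one_rpow, mul_one] at htail
  rw [← htail, ← lintegral_mul_const _ (by fun_prop)]
  refine setLIntegral_congr_fun measurableSet_Ioi fun t ht => ?_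
  have ht0 : 0 < t := one_pos.trans ht
  rw [rieszKernel_smul a (inv_pos.2 ht0), ENNReal.ofReal_inv_of_pos ht0, ENNReal.inv_rpow,
    ← ENNReal.rpow_neg, ← mul_assoc, ← ENNReal.rpow_add _ _ (by simpa using ht0) (by simp)]
  ring_nf

lemma lintegral_Ioi_rpow_neg_mul_indicator_ball [FiniteDimensional ℝ E] [Nontrivial E] {w : E}
    (hw : w ≠ 0) :
    ∫⁻ t in Ioi (0 : ℝ), ENNReal.ofReal t ^ (-(finrank ℝ E + 1 : ℝ)) *
        (ball (0 : E) 1).indicator 1 (t⁻¹ • w)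
      = (finrank ℝ E : ℝ≥0∞)⁻¹ * rieszKernel 0 w := by
  have hw0 : 0 < ‖w‖ := norm_pos_iff.2 hw
  have htail := lintegral_Ioi_ofReal_rpow_neg hw0 (b := finrank ℝ E) (Nat.cast_pos.2 finrank_pos)
  rw [ENNReal.ofReal_natCast, ofReal_norm, ← zero_sub (finrank ℝ E : ℝ), ← rieszKernel] at htail
  rw [← htail, ← lintegral_indicator measurableSet_Ioi, ← lintegral_indicator measurableSet_Ioi]
  refine lintegral_congr fun t => ?_
  by_cases ht : 0 < t
  · have hmem : t⁻¹ • w ∈ ball (0 : E) 1 ↔ t ∈ Ioi ‖w‖ := by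
      rw [mem_ball_zero_iff, norm_smul, norm_inv, Real.norm_of_nonneg ht.le,
        inv_mul_lt_iff₀ ht, mul_one, mem_Ioi]
    by_cases htw : t ∈ Ioi ‖w‖ <;> simp [indicator, hmem, ht, htw]
  · have htw : ¬ ‖w‖ < t := fun h => ht (hw0.trans h)
    simp [ht, htw]

variable [MeasurableSpace E] [BorelSpace E]

lemma measurable_enorm_fderiv (hF : ContDiff ℝ 1 F) :
    Measurable fun x => ‖fderiv ℝ F x‖ₑ :=
  (hF.continuous_fderiv one_ne_zero).enorm.measurable

variable [FiniteDimensional ℝ E] (μ : Measure E) [μ.IsAddHaarMeasure]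

lemma lintegral_enorm_fderiv_add_smul_mul (F : E → G) (χ : E → ℝ≥0∞)
    (x : E) {t : ℝ} (ht : 0 < t) :
    ∫⁻ w, ‖fderiv ℝ F (x + t • w)‖ₑ * ‖w‖ₑ * χ w ∂μ =
      ∫⁻ w, ENNReal.ofReal t ^ (-(finrank ℝ E + 1 : ℝ)) * χ (t⁻¹ • w) *
        (‖fderiv ℝ F (x + w)‖ₑ * ‖w‖ₑ) ∂μ := by
  have hscale := lintegral_comp_smul_addHaar μ
    (fun w => ‖fderiv ℝ F (x + w)‖ₑ * ‖t⁻¹ • w‖ₑ * χ (t⁻¹ • w)) ht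
  simp only [inv_smul_smul₀ ht.ne'] at hscale
  have hpow : ENNReal.ofReal t ^ (-(finrank ℝ E + 1 : ℝ)) =
      (ENNReal.ofReal t ^ finrank ℝ E)⁻¹ * (ENNReal.ofReal t)⁻¹ := by
    rw [neg_add, ENNReal.rpow_add _ _ (by simpa using ht) (by simp), ENNReal.rpow_neg,
      ENNReal.rpow_natCast, ENNReal.rpow_neg_one]
  rw [hscale, ← lintegral_const_mul' _ _ (by simp [ht])]
  refine lintegral_congr fun w => ?_
  rw [hpow, enorm_smul, Real.enorm_of_nonneg (by positivity), ENNReal.ofReal_inv_of_pos ht]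
  ring

/-- Integrate `‖F (x + s w)‖ ≤ ∫_{t > s} ‖DF (x + t w)‖ ‖w‖ dt` against `χ` and substitute
`w ↦ t⁻¹ w`. -/
lemma lintegral_enorm_add_smul_mul_le [Nontrivial E] (hF : ContDiff ℝ 1 F)
    (hFc : HasCompactSupport F) {χ : E → ℝ≥0∞} (hχ : Measurable χ) (x : E) {s : ℝ} (hs : 0 ≤ s) :
    ∫⁻ w, ‖F (x + s • w)‖ₑ * χ w ∂μ ≤
      ∫⁻ w, (∫⁻ t in Ioi s, ENNReal.ofReal t ^ (-(finrank ℝ E + 1 : ℝ)) * χ (t⁻¹ • w)) *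
        (‖fderiv ℝ F (x + w)‖ₑ * ‖w‖ₑ) ∂μ := by
  have hD := measurable_enorm_fderiv hF
  have hray : Measurable fun q : E × ℝ => ‖fderiv ℝ F (x + q.2 • q.1)‖ₑ * ‖q.1‖ₑ * χ q.1 :=
    ((hD.comp (g := fun x => ‖fderiv ℝ F x‖ₑ) (by fun_prop)).mul (by fun_prop)).mul
      (hχ.comp measurable_fst)
  have hK : Measurable fun q : E × ℝ =>
      ENNReal.ofReal q.2 ^ (-(finrank ℝ E + 1 : ℝ)) * χ (q.2⁻¹ • q.1) :=
    Measurable.mul (by fun_prop) (hχ.comp (by fun_prop))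
  have hD' : Measurable fun w => ‖fderiv ℝ F (x + w)‖ₑ * ‖w‖ₑ :=
    (hD.comp (by fun_prop)).mul (by fun_prop)
  calc ∫⁻ w, ‖F (x + s • w)‖ₑ * χ w ∂μ
      ≤ ∫⁻ w, (∫⁻ t in Ioi s, ‖fderiv ℝ F (x + t • w)‖ₑ * ‖w‖ₑ * χ w) ∂μ := by
        refine lintegral_mono_ae ?_
        filter_upwards [Measure.ae_ne μ 0] with w hw
        have hline : Measurable fun t : ℝ => ‖fderiv ℝ F (x + t • w)‖ₑ * ‖w‖ₑ :=
          (hD.comp (g := fun x => ‖fderiv ℝ F x‖ₑ) (by fun_prop)).mul_const _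
        rw [lintegral_mul_const _ hline]
        gcongr
        exact enorm_le_lintegral_Ioi_fderiv hF hFc x hw s
    _ = ∫⁻ t in Ioi s, ∫⁻ w, ‖fderiv ℝ F (x + t • w)‖ₑ * ‖w‖ₑ * χ w ∂μ :=
        lintegral_lintegral_swap hray.aemeasurable
    _ = ∫⁻ t in Ioi s, ∫⁻ w, ENNReal.ofReal t ^ (-(finrank ℝ E + 1 : ℝ)) * χ (t⁻¹ • w) *
          (‖fderiv ℝ F (x + w)‖ₑ * ‖w‖ₑ) ∂μ :=
        setLIntegral_congr_fun measurableSet_Ioi fun t ht =>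
          lintegral_enorm_fderiv_add_smul_mul μ F χ x (hs.trans_lt ht)
    _ = _ := by
        rw [← lintegral_lintegral_swap (μ := μ)
          (hK.mul (hD'.comp measurable_fst)).aemeasurable]
        refine lintegral_congr fun w => lintegral_mul_const _ ?_
        exact hK.comp measurable_prodMk_left

lemma rieszPotential_enorm_le_fderiv [Nontrivial E] (hF : ContDiff ℝ 1 F)
    (hFc : HasCompactSupport F) {a : ℝ} (ha : 0 < a) (x : E) :
    rieszPotential μ a (fun y => ‖F y‖ₑ) x ≤
      (ENNReal.ofReal a)⁻¹ * rieszPotential μ (a + 1) (fun y => ‖fderiv ℝ F y‖ₑ) x := by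
  have h := lintegral_enorm_add_smul_mul_le μ hF hFc (measurable_rieszKernel a) x zero_le_one
  simp only [one_smul, lintegral_Ioi_rpow_neg_mul_rieszKernel ha] at h
  rw [rieszPotential_eq_lintegral_add, rieszPotential_eq_lintegral_add,
    ← lintegral_const_mul' _ _ (by simp [ha])]
  refine h.trans_eq (lintegral_congr_ae ?_)
  filter_upwards [Measure.ae_ne μ 0] with w hw
  rw [← rieszKernel_mul_enorm a hw]
  ring

lemma enorm_le_rieszPotential_fderiv [Nontrivial E] (hF : ContDiff ℝ 1 F)
    (hFc : HasCompactSupport F) (x : E) :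
    ‖F x‖ₑ ≤ ((finrank ℝ E : ℝ≥0∞) * μ (ball 0 1))⁻¹ *
      rieszPotential μ 1 (fun y => ‖fderiv ℝ F y‖ₑ) x := by
  have hn : (finrank ℝ E : ℝ≥0∞) ≠ 0 := Nat.cast_ne_zero.2 finrank_pos.ne'
  have hχ : Measurable ((ball (0 : E) 1).indicator (1 : E → ℝ≥0∞)) :=
    measurable_one.indicator measurableSet_ball
  have hball : ∫⁻ w, ‖F (x + (0 : ℝ) • w)‖ₑ * (ball 0 1).indicator 1 w ∂μ
      = μ (ball 0 1) * ‖F x‖ₑ := by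
    simp only [zero_smul, add_zero]
    rw [lintegral_const_mul _ hχ, lintegral_indicator_one measurableSet_ball, mul_comm]
  have hpot : ∫⁻ w, (∫⁻ t in Ioi (0 : ℝ), ENNReal.ofReal t ^ (-(finrank ℝ E + 1 : ℝ)) *
        (ball 0 1).indicator 1 (t⁻¹ • w)) * (‖fderiv ℝ F (x + w)‖ₑ * ‖w‖ₑ) ∂μ =
      (finrank ℝ E : ℝ≥0∞)⁻¹ * rieszPotential μ 1 (fun y => ‖fderiv ℝ F y‖ₑ) x := by
    rw [rieszPotential_eq_lintegral_add, ← lintegral_const_mul' _ _ (ENNReal.inv_ne_top.2 hn)]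
    refine lintegral_congr_ae ?_
    filter_upwards [Measure.ae_ne μ 0] with w hw
    rw [lintegral_Ioi_rpow_neg_mul_indicator_ball hw, ← zero_add (1 : ℝ),
      ← rieszKernel_mul_enorm 0 hw]
    ring
  have h := lintegral_enorm_add_smul_mul_le μ hF hFc hχ x le_rfl
  rw [hball, hpot] at h
  rw [ENNReal.mul_inv (.inl hn) (.inl (by finiteness)), mul_comm (_⁻¹) (_⁻¹), mul_assoc]
  exact (ENNReal.mul_le_iff_le_inv (measure_ball_pos μ 0 one_pos).ne' measure_ball_lt_top.ne).1 h

end HardyInequality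

section HigherOrderHardy

variable {E : Type*} [NormedAddCommGroup E] [NormedSpace ℝ E] [FiniteDimensional ℝ E]
  [Nontrivial E] [MeasurableSpace E] [BorelSpace E] (μ : Measure E) [μ.IsAddHaarMeasure]
  {G : Type*} [NormedAddCommGroup G] [NormedSpace ℝ G]

theorem enorm_le_rieszPotential_iteratedFDeriv (m : ℕ) {u : E → G} (hu : ContDiff ℝ (m + 1) u)
    (huc : HasCompactSupport u) (x : E) :
    ‖u x‖ₑ ≤ ((finrank ℝ E : ℝ≥0∞) * μ (ball 0 1))⁻¹ * (m ! : ℝ≥0∞)⁻¹ *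
      rieszPotential μ (m + 1) (fun y => ‖iteratedFDeriv ℝ (m + 1) u y‖ₑ) x := by
  induction m with
  | zero =>
    simpa [← ofReal_norm, norm_iteratedFDeriv_one] using
      enorm_le_rieszPotential_fderiv μ (by simpa using hu) huc x
  | succ m ih =>
    have hstep := rieszPotential_enorm_le_fderiv μ (a := m + 1)
      (hu.iteratedFDeriv_right (m := 1) (i := m + 1) (by push_cast; rw [add_comm]))
      (huc.iteratedFDeriv (m + 1)) (by positivity) x
    simp only [← ofReal_norm, norm_fderiv_iteratedFDeriv] at hstep
    simp only [ofReal_norm] at hstep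
    have hfact : ((m + 1)! : ℝ≥0∞)⁻¹ = (m ! : ℝ≥0∞)⁻¹ * (ENNReal.ofReal (m + 1))⁻¹ := by
      rw [Nat.factorial_succ, mul_comm, Nat.cast_mul,
        ENNReal.mul_inv (.inr (ENNReal.natCast_ne_top _)) (.inl (ENNReal.natCast_ne_top _)),
        ← Nat.cast_succ, ENNReal.ofReal_natCast]
    refine (ih (hu.of_le (by gcongr; simp))).trans ?_
    rw [hfact, ← mul_assoc, mul_assoc (_ * _) (ENNReal.ofReal _)⁻¹]
    gcongr
    push_cast
    exact hstep

theorem enorm_fderiv_le_rieszPotential_iteratedFDeriv (m : ℕ) {u : E → G}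
    (hu : ContDiff ℝ (m + 2) u) (huc : HasCompactSupport u) (x : E) :
    ‖fderiv ℝ u x‖ₑ ≤ ((finrank ℝ E : ℝ≥0∞) * μ (ball 0 1))⁻¹ * (m ! : ℝ≥0∞)⁻¹ *
      rieszPotential μ (m + 1) (fun y => ‖iteratedFDeriv ℝ (m + 2) u y‖ₑ) x := by
  have h := enorm_le_rieszPotential_iteratedFDeriv μ m
    (hu.fderiv_right (m := m + 1) (by rw [add_assoc, one_add_one_eq_two])) (huc.fderiv ℝ) x
  simp only [← ofReal_norm, norm_iteratedFDeriv_fderiv] at h ⊢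
  exact h

end HigherOrderHardy

section HajlaszGradient

lemma laverage_add_left {α : Type*} [MeasurableSpace α] {μ : Measure α} {g : α → ℝ≥0∞}
    (hg : AEMeasurable g μ) (h : α → ℝ≥0∞) :
    ⨍⁻ x, (g x + h x) ∂μ = ⨍⁻ x, g x ∂μ + ⨍⁻ x, h x ∂μ := by
  simp only [laverage_eq, lintegral_add_left' hg, ENNReal.add_div]

/-- `P` is a Hajłasz gradient of `u` on `S`: the increments of `u` on `S` obey
`|u(x) - u(y)| ≤ |x - y| (P(x) + P(y))`. -/
def IsHajlaszGradientOn {X Y : Type*} [PseudoEMetricSpace X] [PseudoEMetricSpace Y]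
    (P : X → ℝ≥0∞) (u : X → Y) (S : Set X) : Prop :=
  ∀ x ∈ S, ∀ y ∈ S, edist (u x) (u y) ≤ edist x y * (P x + P y)

lemma IsHajlaszGradientOn.of_tendsto {X Y ι : Type*} [PseudoEMetricSpace X]
    [PseudoEMetricSpace Y] {P : X → ℝ≥0∞} {u : ι → X → Y} {v : X → Y} {S : Set X}
    {l : Filter ι} [l.NeBot] (hu : ∀ᶠ i in l, IsHajlaszGradientOn P (u i) S)
    (huv : ∀ x ∈ S, Tendsto (fun i => u i x) l (𝓝 (v x))) : IsHajlaszGradientOn P v S :=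
  fun x hx y hy => le_of_tendsto ((huv x hx).edist (huv y hy)) <| hu.mono fun _ h => h x hx y hy

lemma enorm_setAverage_sub_le {α G : Type*} [MeasurableSpace α] {μ : Measure α}
    [NormedAddCommGroup G] [NormedSpace ℝ G] [CompleteSpace G] {s : Set α} (hs₀ : μ s ≠ 0)
    (hs : μ s ≠ ⊤) {f : α → G} (hf : IntegrableOn f s μ) (c : G) :
    ‖(⨍ y in s, f y ∂μ) - c‖ₑ ≤ ⨍⁻ y in s, ‖f y - c‖ₑ ∂μ := by
  calc ‖(⨍ y in s, f y ∂μ) - c‖ₑ = ‖⨍ y in s, (f y - c) ∂μ‖ₑ := by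
        conv_lhs => rw [← setAverage_const hs₀ hs c]
        simp only [setAverage_eq, integral_sub hf (integrableOn_const hs), smul_sub]
    _ ≤ ⨍⁻ y in s, ‖f y - c‖ₑ ∂μ := enorm_integral_le_lintegral_enorm _

variable {E : Type*} [NormedAddCommGroup E] [NormedSpace ℝ E]
  [MeasurableSpace E] [BorelSpace E] [FiniteDimensional ℝ E] {μ : Measure E} [μ.IsAddHaarMeasure]
  {A : ℝ≥0} {P : E → ℝ≥0∞} {G : Type*} [NormedAddCommGroup G] [NormedSpace ℝ G]

lemma IsA1Weight.laverage_ball_enorm_sub_le (hP : IsA1Weight μ A P) {u : E → G}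
    (hu : ContDiff ℝ 1 u) (huP : ∀ x, ‖fderiv ℝ u x‖ₑ ≤ P x) (x : E) {r : ℝ} (hr : 0 < r) :
    ⨍⁻ y in ball x r, ‖u y - u x‖ₑ ∂μ ≤ ENNReal.ofReal r * (A * P x) := by
  have hPm := hP.measurable
  have hsegment (z : E) (hz : z ∈ ball 0 r) :
      ‖u (x + z) - u x‖ₑ ≤ ∫⁻ t in Icc (0 : ℝ) 1, ENNReal.ofReal r * P (x + t • z) := by
    have h := enorm_sub_le_lintegral_deriv_of_contDiffOn_Icc (f := fun t : ℝ => u (x + t • z))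
      (hu.comp (by fun_prop : ContDiff ℝ 1 fun t : ℝ => x + t • z)).contDiffOn zero_le_one
    simp only [one_smul, zero_smul, add_zero] at h
    refine h.trans (lintegral_mono fun t => ?_)
    refine (enorm_deriv_comp_smul_add_le (hu.differentiable one_ne_zero) x z t).trans ?_
    rw [mul_comm, ← ofReal_norm z]
    gcongr
    exacts [(mem_ball_zero_iff.1 hz).le, huP _]
  have hmean (t : ℝ) (ht : 0 < t) :
      ⨍⁻ z in ball (0 : E) r, ENNReal.ofReal r * P (x + t • z) ∂μ ≤
        ENNReal.ofReal r * (A * P x) := by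
    rw [laverage_const_mul (by fun_prop), ← laverage_ball_mul μ P x ht]
    gcongr
    exact hP.laverage_ball_le x (mul_pos ht hr)
  rw [laverage_ball_eq_laverage_ball_zero]
  calc ⨍⁻ z in ball 0 r, ‖u (x + z) - u x‖ₑ ∂μ
      ≤ ⨍⁻ z in ball 0 r, (∫⁻ t in Icc (0 : ℝ) 1, ENNReal.ofReal r * P (x + t • z)) ∂μ :=
        laverage_mono_ae <| (ae_restrict_mem measurableSet_ball).mono hsegment
    _ = ∫⁻ t in Icc (0 : ℝ) 1, (⨍⁻ z in ball 0 r, ENNReal.ofReal r * P (x + t • z) ∂μ) :=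
        laverage_lintegral_swap (by fun_prop) _
    _ ≤ ∫⁻ _ in Icc (0 : ℝ) 1, ENNReal.ofReal r * (A * P x) := by
        rw [← restrict_Ioc_eq_restrict_Icc]
        exact setLIntegral_mono' measurableSet_Ioc fun t ht => hmean t ht.1
    _ = ENNReal.ofReal r * (A * P x) := by simp

-- Compare `u x` and `u y` through the mean over the ball with diameter `[x, y]`.
lemma isHajlaszGradientOn_of_laverage_ball_le {G : Type*} [NormedAddCommGroup G] {u : E → G}
    (hu : AEStronglyMeasurable u μ)
    (h : ∀ x, ∀ r > 0, ⨍⁻ y in ball x r, ‖u y - u x‖ₑ ∂μ ≤ ENNReal.ofReal r * P x) :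
    IsHajlaszGradientOn (fun x => 2 ^ finrank ℝ E * P x) u univ := by
  intro x _ y _
  rcases eq_or_ne x y with rfl | hxy
  · simp
  set s := dist x y / 2 with hs
  have hs0 : 0 < s := half_pos (dist_pos.2 hxy)
  set B := ball (midpoint ℝ x y) s
  have hBx : B ⊆ ball x (2 * s) := ball_subset_ball' (by
    rw [dist_midpoint_left, hs]; norm_num; linarith)
  have hBy : B ⊆ ball y (2 * s) := ball_subset_ball' (by
    rw [dist_midpoint_right, hs]; norm_num; linarith)
  have hmean (w : E) (hw : B ⊆ ball w (2 * s)) :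
      ⨍⁻ z in B, ‖u z - u w‖ₑ ∂μ ≤ edist x y * (2 ^ finrank ℝ E * P w) := by
    refine (laverage_ball_le_of_subset μ _ two_pos hw).trans ?_
    rw [mul_left_comm, edist_dist, ENNReal.ofReal_ofNat, ← mul_div_cancel₀ (dist x y) two_ne_zero]
    gcongr
    exact h w (2 * s) (by positivity)
  calc edist (u x) (u y) = ⨍⁻ _ in B, edist (u x) (u y) ∂μ :=
        (setLAverage_const (measure_ball_pos μ _ hs0).ne' measure_ball_lt_top.ne _).symm
    _ ≤ ⨍⁻ z in B, (‖u z - u x‖ₑ + ‖u z - u y‖ₑ) ∂μ := by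
        refine laverage_mono_ae (.of_forall fun z => ?_)
        simp only [← edist_eq_enorm_sub]
        exact edist_triangle_left _ _ _
    _ = ⨍⁻ z in B, ‖u z - u x‖ₑ ∂μ + ⨍⁻ z in B, ‖u z - u y‖ₑ ∂μ :=
        laverage_add_left (hu.sub aestronglyMeasurable_const).enorm.restrict _
    _ ≤ edist x y * (2 ^ finrank ℝ E * P x + 2 ^ finrank ℝ E * P y) := by
        rw [mul_add]
        exact add_le_add (hmean x hBx) (hmean y hBy)

variable [CompleteSpace G]

theorem IsHajlaszGradientOn.edist_average_ball_le (hP : IsA1Weight μ A P) {f : E → G} {S : Set E}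
    (hf : IsHajlaszGradientOn P f S) {x x' : E} {r r' : ℝ} (hr : 0 < r) (hr' : 0 < r')
    (hfx : IntegrableOn f (ball x r) μ) (hfx' : IntegrableOn f (ball x' r') μ)
    (hxS : ∀ᵐ y ∂μ.restrict (ball x r), y ∈ S) (hxS' : ∀ᵐ y ∂μ.restrict (ball x' r'), y ∈ S) :
    edist (⨍ y in ball x r, f y ∂μ) (⨍ y in ball x' r', f y ∂μ) ≤
      (ENNReal.ofReal r + edist x x' + ENNReal.ofReal r') * (A * P x + A * P x') := by
  set D := ENNReal.ofReal r + edist x x' + ENNReal.ofReal r'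
  have hball₀ (x : E) {r : ℝ} (hr : 0 < r) : μ (ball x r) ≠ 0 := (measure_ball_pos μ x hr).ne'
  have hball (x : E) (r : ℝ) : μ (ball x r) ≠ ⊤ := measure_ball_lt_top.ne
  have hmean (b : ℝ≥0∞) (x : E) {r : ℝ} (hr : 0 < r) :
      ⨍⁻ y in ball x r, D * (b + P y) ∂μ ≤ D * (b + A * P x) := by
    rw [laverage_const_mul (hP.measurable.const_add b), laverage_add_left aemeasurable_const,
      setLAverage_const (hball₀ x hr) (hball x r)]
    gcongr
    exact hP.laverage_ball_le x hr
  have hdist {y z : E} (hy : y ∈ ball x r) (hz : z ∈ ball x' r') : edist y z ≤ D := by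
    refine (edist_triangle4 y x x' z).trans ?_
    rw [edist_comm x' z, edist_dist y x, edist_dist z x']
    exact add_le_add (add_le_add_left (ENNReal.ofReal_le_ofReal hy.le) _)
      (ENNReal.ofReal_le_ofReal hz.le)
  have hpoint {y : E} (hy : y ∈ ball x r) (hyS : y ∈ S) :
      ‖f y - ⨍ z in ball x' r', f z ∂μ‖ₑ ≤ D * (P y + A * P x') := by
    rw [enorm_sub_rev]
    refine (enorm_setAverage_sub_le (hball₀ x' hr') (hball x' r') hfx' (f y)).trans
      (le_trans ?_ (hmean (P y) x' hr'))
    refine laverage_mono_ae ?_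
    filter_upwards [hxS', ae_restrict_mem measurableSet_ball] with z hzS hz
    rw [← edist_eq_enorm_sub, edist_comm]
    exact (hf y hyS z hzS).trans (by gcongr; exact hdist hy hz)
  rw [edist_eq_enorm_sub]
  refine (enorm_setAverage_sub_le (hball₀ x hr) (hball x r) hfx _).trans ?_
  rw [add_comm (A * P x)]
  refine le_trans (laverage_mono_ae ?_) (hmean (A * P x') x hr)
  filter_upwards [hxS, ae_restrict_mem measurableSet_ball] with y hyS hy
  rw [add_comm (A * P x')]
  exact hpoint hy hyS

end HajlaszGradient

section PreciseRepresentative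

variable {n : ℕ} {G : Type*} [NormedAddCommGroup G] [NormedSpace ℝ G] {f : Euc n → G}

lemma tendsto_preciseRepV {x : Euc n}
    (h : ∃ c, Tendsto (fun ε => ⨍ y in ball x ε, f y) (𝓝[>] 0) (𝓝 c)) :
    Tendsto (fun ε => ⨍ y in ball x ε, f y) (𝓝[>] 0) (𝓝 (preciseRepV f x)) := by
  rw [preciseRepV, dif_pos h]
  exact h.choose_spec

variable [CompleteSpace G]

theorem lipschitzOnWith_preciseRepV {T : Set (Euc n)} {L : ℝ≥0} {δ : ℝ} (hδ : 0 < δ)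
    (h : ∀ x ∈ T, ∀ x' ∈ T, ∀ r ∈ Ioo 0 δ, ∀ r' ∈ Ioo 0 δ,
      edist (⨍ y in ball x r, f y) (⨍ y in ball x' r', f y) ≤
        L * (ENNReal.ofReal r + edist x x' + ENNReal.ofReal r')) :
    LipschitzOnWith L (preciseRepV f) T := by
  have hδ' : ∀ᶠ r in 𝓝[>] (0 : ℝ), r ∈ Ioo 0 δ := Ioo_mem_nhdsGT hδ
  have hzero : Tendsto ENNReal.ofReal (𝓝[>] 0) (𝓝 0) :=
    (ENNReal.continuous_ofReal.tendsto' 0 0 ENNReal.ofReal_zero).mono_left nhdsWithin_le_nhds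
  have hbound (d : ℝ≥0∞) :
      Tendsto (fun q : ℝ × ℝ => L * (ENNReal.ofReal q.1 + d + ENNReal.ofReal q.2))
        (𝓝[>] 0 ×ˢ 𝓝[>] 0) (𝓝 (L * d)) := by
    have h := ((hzero.comp tendsto_fst).add_const d).add (hzero.comp tendsto_snd)
    rw [zero_add, add_zero] at h
    exact ENNReal.Tendsto.const_mul h (.inr ENNReal.coe_ne_top)
  have hlim : ∀ x ∈ T, Tendsto (fun ε => ⨍ y in ball x ε, f y) (𝓝[>] 0) (𝓝 (preciseRepV f x)) := by
    intro x hx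
    refine tendsto_preciseRepV (cauchy_map_iff_exists_tendsto.1 (cauchy_map_iff'.2 ?_))
    refine uniformity_basis_edist.tendsto_right_iff.2 fun ε hε => ?_
    have hsmall := hbound (edist x x)
    rw [edist_self, mul_zero] at hsmall
    filter_upwards [hsmall.eventually_lt_const hε, hδ'.prod_mk hδ'] with q hq hqδ
    simpa using (h x hx x hx q.1 hqδ.1 q.2 hqδ.2).trans_lt (by simpa using hq)
  intro x hx x' hx'
  refine le_of_tendsto_of_tendsto ((hlim x hx).edist (hlim x' hx'))
    ((hbound (edist x x')).comp (tendsto_id.prodMk tendsto_id)) ?_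
  filter_upwards [hδ'] with r hr using h x hx x' hx' r hr r hr

theorem IsHajlaszGradientOn.lipschitzOnWith_preciseRepV {A : ℝ≥0} {P : Euc n → ℝ≥0∞}
    (hP : IsA1Weight volume A P) {S K : Set (Euc n)} (hf : IsHajlaszGradientOn P f S)
    {δ : ℝ} (hδ : 0 < δ) (hfK : ∀ x ∈ K, IntegrableOn f (ball x δ))
    (hKS : ∀ᵐ y, y ∈ thickening δ K → y ∈ S) (N : ℝ≥0) :
    LipschitzOnWith (A * N + A * N) (preciseRepV f) (K ∩ {x | P x ≤ N}) := by
  refine _root_.lipschitzOnWith_preciseRepV hδ fun x hx x' hx' r hr r' hr' => ?_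
  have hball {x : Euc n} (hx : x ∈ K) {r : ℝ} (hr : r ∈ Ioo 0 δ) :
      IntegrableOn f (ball x r) ∧ ∀ᵐ y ∂volume.restrict (ball x r), y ∈ S := by
    refine ⟨(hfK x hx).mono_set (ball_subset_ball hr.2.le), ?_⟩
    filter_upwards [ae_restrict_of_ae hKS, ae_restrict_mem measurableSet_ball] with y hy hyr
    exact hy (mem_thickening_iff.2 ⟨x, hx, hyr.trans hr.2⟩)
  refine (hf.edist_average_ball_le hP hr.1 hr'.1 (hball hx.1 hr).1 (hball hx'.1 hr').1
    (hball hx.1 hr).2 (hball hx'.1 hr').2).trans ?_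
  rw [mul_comm]
  push_cast
  gcongr
  exacts [hx.2, hx'.2]

end PreciseRepresentative

section MultiIndexDerivatives

variable {n : ℕ} {u : Euc n → ℝ}

lemma listDeriv_cons (i : Fin n) (l : List (Fin n)) (u : Euc n → ℝ) (x : Euc n) :
    listDeriv (i :: l) u x = fderiv ℝ (listDeriv l u) x (EuclideanSpace.single i 1) :=
  rfl

lemma contDiff_listDeriv (l : List (Fin n)) (hu : ContDiff ℝ (⊤ : ℕ∞) u) :
    ContDiff ℝ (⊤ : ℕ∞) (listDeriv l u) := by
  induction l with
  | nil => exact hu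
  | cons i l ih => exact (ih.fderiv_right (by exact_mod_cast le_top)).clm_apply contDiff_const

lemma hasCompactSupport_listDeriv (l : List (Fin n)) (hu : HasCompactSupport u) :
    HasCompactSupport (listDeriv l u) := by
  induction l with
  | nil => exact hu
  | cons i l ih => exact ih.fderiv_apply ℝ _

lemma listDeriv_cons_cons_swap (i j : Fin n) (l : List (Fin n)) (hu : ContDiff ℝ (⊤ : ℕ∞) u) :
    listDeriv (i :: j :: l) u = listDeriv (j :: i :: l) u := by
  ext x
  have hl := contDiff_listDeriv l hu
  have hdiff := (hl.fderiv_right (m := (⊤ : ℕ∞)) (by exact_mod_cast le_top)).differentiable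
    (by simp) x
  have hsymm : IsSymmSndFDerivAt ℝ (listDeriv l u) x :=
    hl.contDiffAt.isSymmSndFDerivAt <| by
      rw [minSmoothness_of_isRCLikeNormedField]
      exact WithTop.coe_le_coe.2 le_top
  simp only [listDeriv]
  rw [fderiv_clm_apply hdiff (by fun_prop), fderiv_clm_apply hdiff (by fun_prop)]
  simp [hsymm.eq]

lemma listDeriv_perm {l l' : List (Fin n)} (h : l.Perm l') (hu : ContDiff ℝ (⊤ : ℕ∞) u) :
    listDeriv l u = listDeriv l' u := by
  induction h with
  | nil => rfl
  | cons i _ ih => simp only [listDeriv, ih]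
  | swap i j l => exact listDeriv_cons_cons_swap j i l hu
  | trans _ _ ih ih' => exact ih.trans ih'

lemma mderiv_count (l : List (Fin n)) (hu : ContDiff ℝ (⊤ : ℕ∞) u) :
    mderiv (fun i => l.count i) u = listDeriv l u := by
  refine listDeriv_perm (List.perm_iff_count.2 fun i => ?_) hu
  rw [List.count_flatMap]
  simp only [Function.comp_def, List.count_replicate]
  rw [← List.ofFn_eq_map, List.sum_ofFn]
  simp

lemma mdeg_count (l : List (Fin n)) : mdeg (fun i => l.count i) = l.length := by
  rw [mdeg, ← List.sum_toFinset_count_eq_length]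
  exact (Finset.sum_subset (Finset.subset_univ _) fun i _ hi =>
    List.count_eq_zero.2 (by simpa using hi)).symm

lemma listDeriv_ofFn (hu : ContDiff ℝ (⊤ : ℕ∞) u) {j : ℕ} (r : Fin j → Fin n) (x : Euc n) :
    listDeriv (List.ofFn r) u x =
      iteratedFDeriv ℝ j u x fun i => EuclideanSpace.single (r i) 1 := by
  induction j generalizing x with
  | zero => simp [listDeriv]
  | succ j ih =>
    have hdiff : DifferentiableAt ℝ (iteratedFDeriv ℝ j u) x :=
      (hu.iteratedFDeriv_right (m := 1) (by exact_mod_cast le_top)).differentiable one_ne_zero x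
    rw [List.ofFn_succ, listDeriv_cons, funext (ih fun i => r i.succ),
      iteratedFDeriv_succ_apply_left,
      fderiv_continuousMultilinear_apply_const_apply hdiff]
    rfl

lemma norm_le_sum_norm_apply_single {j : ℕ} {G : Type*} [NormedAddCommGroup G]
    [NormedSpace ℝ G] (T : Euc n [×j]→L[ℝ] G) :
    ‖T‖ ≤ ∑ r : Fin j → Fin n, ‖T fun i => EuclideanSpace.single (r i) 1‖ := by
  refine T.opNorm_le_bound (by positivity) fun v => ?_
  have hv : v = fun i => ∑ k, v i k • EuclideanSpace.single k (1 : ℝ) := by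
    ext i k
    simp [Pi.single_apply]
  conv_lhs => rw [hv, T.map_sum]
  rw [Finset.sum_mul]
  refine (norm_sum_le _ _).trans (Finset.sum_le_sum fun r _ => ?_)
  rw [T.map_smul_univ, norm_smul, norm_prod, mul_comm]
  gcongr with i
  exact PiLp.norm_apply_le (v i) (r i)

lemma enorm_iteratedFDeriv_le_sum_listDeriv (hu : ContDiff ℝ (⊤ : ℕ∞) u) (j : ℕ) (x : Euc n) :
    ‖iteratedFDeriv ℝ j u x‖ₑ ≤ ∑ r : Fin j → Fin n, ‖listDeriv (List.ofFn r) u x‖ₑ := by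
  simp only [← ofReal_norm, listDeriv_ofFn hu]
  rw [← ENNReal.ofReal_sum_of_nonneg fun _ _ => norm_nonneg _]
  exact ENNReal.ofReal_le_ofReal (norm_le_sum_norm_apply_single _)

lemma listDeriv_comp_sub_left (l : List (Fin n)) (hu : ContDiff ℝ (⊤ : ℕ∞) u) (x : Euc n) :
    listDeriv l (fun y => u (x - y)) = fun y => (-1) ^ l.length * listDeriv l u (x - y) := by
  induction l with
  | nil => simp [listDeriv]
  | cons i l ih =>
    ext y
    have hl := (contDiff_listDeriv l hu).differentiable (by simp) (x - y)
    have hcomp := (hl.hasFDerivAt.comp y ((hasFDerivAt_id y).const_sub x)).const_mul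
      ((-1) ^ l.length)
    simp only [Function.comp_def] at hcomp
    rw [listDeriv_cons, ih, hcomp.fderiv]
    simp [listDeriv_cons, pow_succ]

lemma listDeriv_convolution_right {E : Type*} [NormedAddCommGroup E] [NormedSpace ℝ E]
    (B : E →L[ℝ] ℝ →L[ℝ] ℝ) (l : List (Fin n)) {F : Euc n → E} (hF : LocallyIntegrable F)
    (hu : ContDiff ℝ (⊤ : ℕ∞) u) (huc : HasCompactSupport u) :
    listDeriv l (F ⋆[B] u) = F ⋆[B] listDeriv l u := by
  induction l with
  | nil => rfl
  | cons i l ih =>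
    ext x
    have hl := contDiff_listDeriv l hu
    have hlc := hasCompactSupport_listDeriv l huc
    rw [listDeriv_cons, ih, (hlc.hasFDerivAt_convolution_right B hF
        (hl.of_le (by exact_mod_cast le_top)) x).fderiv,
      convolution_precompR_apply B hF (hlc.fderiv ℝ) (hl.continuous_fderiv (by simp))]
    rfl

lemma setIntegral_listDeriv_comp_sub_left_mul {U : Set (Euc n)} {l : List (Fin n)}
    {f g : Euc n → ℝ} (hfg : IsWeakDerivOn U (fun i => l.count i) f g)
    (hu : ContDiff ℝ (⊤ : ℕ∞) u) (huc : HasCompactSupport u) {x : Euc n}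
    (hx : ∀ y, x - y ∈ tsupport u → y ∈ U) :
    ∫ y in U, listDeriv l u (x - y) * f y = ∫ y in U, u (x - y) * g y := by
  have hweak := hfg (fun y => u (x - y)) (by fun_prop) (huc.comp_homeomorph (.subLeft x))
    fun y hy => hx y (tsupport_comp_subset_preimage u (f := fun y => x - y) (by fun_prop) hy)
  rw [mderiv_count l (by fun_prop), listDeriv_comp_sub_left l hu, mdeg_count] at hweak
  simp only [mul_left_comm (f _), integral_const_mul] at hweak
  simpa only [mul_comm] using
    mul_left_cancel₀ (pow_ne_zero l.length (neg_ne_zero.2 one_ne_zero)) hweak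

end MultiIndexDerivatives

section Leibniz

variable {E G : Type*} [NormedAddCommGroup E] [NormedSpace ℝ E] [NormedAddCommGroup G]
  [NormedSpace ℝ G] {ζ : E → ℝ}

lemma exists_enorm_iteratedFDeriv_le {v : E → G} {k : ℕ} (hv : ContDiff ℝ k v)
    (hvc : HasCompactSupport v) :
    ∃ b : ℝ≥0, ∀ x, ‖iteratedFDeriv ℝ k v x‖ₑ ≤ b := by
  obtain ⟨b, hb⟩ := (hvc.iteratedFDeriv (𝕜 := ℝ) k).exists_bound_of_continuous
    (hv.continuous_iteratedFDeriv le_rfl)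
  refine ⟨b.toNNReal, fun x => ?_⟩
  rw [← ofReal_norm]
  exact ENNReal.ofReal_le_ofReal (hb x)

theorem exists_enorm_iteratedFDeriv_smul_le {k : ℕ} (hζ : ContDiff ℝ k ζ)
    (hζc : HasCompactSupport ζ) :
    ∃ B : ℝ≥0, ∀ u : E → G, ContDiff ℝ k u → ∀ x,
      ‖iteratedFDeriv ℝ k (fun y => ζ y • u y) x‖ₑ ≤
        B * ∑ j ∈ Finset.range (k + 1), ‖iteratedFDeriv ℝ j u x‖ₑ := by
  have hbound (i : ℕ) : ∃ b : ℝ≥0, i ≤ k → ∀ x, ‖iteratedFDeriv ℝ i ζ x‖ₑ ≤ b := by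
    by_cases hi : i ≤ k
    · obtain ⟨b, hb⟩ := exists_enorm_iteratedFDeriv_le (hζ.of_le (by exact_mod_cast hi)) hζc
      exact ⟨b, fun _ => hb⟩
    · exact ⟨0, fun h => absurd h hi⟩
  choose b hb using hbound
  refine ⟨∑ i ∈ Finset.range (k + 1), (k.choose i : ℝ≥0) * b i, fun u hu x => ?_⟩
  have hleibniz : ‖iteratedFDeriv ℝ k (fun y => ζ y • u y) x‖ₑ ≤ ∑ i ∈ Finset.range (k + 1),
      (k.choose i : ℝ≥0∞) * ‖iteratedFDeriv ℝ i ζ x‖ₑ * ‖iteratedFDeriv ℝ (k - i) u x‖ₑ := by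
    have h := ENNReal.ofReal_le_ofReal (norm_iteratedFDeriv_smul_le hζ hu x le_rfl)
    rw [ENNReal.ofReal_sum_of_nonneg fun _ _ => by positivity, ofReal_norm] at h
    simpa only [ENNReal.ofReal_mul, norm_nonneg, Nat.cast_nonneg, mul_nonneg, ofReal_norm,
      ENNReal.ofReal_natCast] using h
  refine hleibniz.trans ?_
  push_cast
  rw [Finset.sum_mul]
  refine Finset.sum_le_sum fun i hi => ?_
  gcongr
  · exact hb i (by grind) x
  · exact Finset.single_le_sum (f := fun j => ‖iteratedFDeriv ℝ j u x‖ₑ) (fun _ _ => zero_le)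
      (by grind)

lemma iteratedFDeriv_smul_eq_zero_of_notMem_tsupport (k : ℕ) (u : E → G) {x : E}
    (hx : x ∉ tsupport ζ) : iteratedFDeriv ℝ k (fun y => ζ y • u y) x = 0 := by
  contrapose! hx
  exact tsupport_smul_subset_left ζ u
    (tsupport_iteratedFDeriv_subset (𝕜 := ℝ) k (subset_tsupport _ hx))

end Leibniz

section Mollification

variable {n : ℕ} {U : Set (Euc n)} {f g : Euc n → ℝ}

/-- The mollification of `f` by the normalized bump function `ρ`, where `f` is extended by zero
outside `U`. -/
def mollify (ρ : ContDiffBump (0 : Euc n)) (U : Set (Euc n)) (f : Euc n → ℝ) : Euc n → ℝ :=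
  ρ.normed volume ⋆[ContinuousLinearMap.lsmul ℝ ℝ, volume] U.indicator f

lemma convolution_lsmul_indicator (hU : MeasurableSet U) (η f : Euc n → ℝ) (x : Euc n) :
    (η ⋆[ContinuousLinearMap.lsmul ℝ ℝ, volume] U.indicator f) x =
      ∫ y in U, η (x - y) * f y := by
  rw [convolution_eq_swap, ← integral_indicator hU]
  congr with y
  by_cases hy : y ∈ U <;> simp [hy]

lemma locallyIntegrable_indicator (hU : MeasurableSet U) (hf : IntegrableOn f U) :
    LocallyIntegrable (U.indicator f) :=
  ((integrable_indicator_iff hU).2 hf).locallyIntegrable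

variable {ρ : ContDiffBump (0 : Euc n)}

lemma contDiff_mollify (hU : MeasurableSet U) (hf : IntegrableOn f U) :
    ContDiff ℝ (⊤ : ℕ∞) (mollify ρ U f) :=
  ρ.hasCompactSupport_normed.contDiff_convolution_left _ ρ.contDiff_normed
    (locallyIntegrable_indicator hU hf)

theorem listDeriv_mollify {l : List (Fin n)} (hU : MeasurableSet U) (hf : IntegrableOn f U)
    (hfg : IsWeakDerivOn U (fun i => l.count i) f g) {x : Euc n}
    (hx : closedBall x ρ.rOut ⊆ U) : listDeriv l (mollify ρ U f) x = mollify ρ U g x := by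
  rw [mollify, ← convolution_flip, listDeriv_convolution_right _ l
    (locallyIntegrable_indicator hU hf) ρ.contDiff_normed ρ.hasCompactSupport_normed,
    convolution_flip, mollify, convolution_lsmul_indicator hU, convolution_lsmul_indicator hU]
  refine setIntegral_listDeriv_comp_sub_left_mul hfg ρ.contDiff_normed
    ρ.hasCompactSupport_normed fun y hy => hx ?_
  rw [ρ.tsupport_normed_eq, mem_closedBall_zero_iff] at hy
  rwa [mem_closedBall', dist_eq_norm]

lemma enorm_normed_le_indicator_ball (hρ : ρ.rOut ≤ 2 * ρ.rIn) (x y : Euc n) :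
    ‖ρ.normed volume (x - y)‖ₑ ≤
      (ball x ρ.rOut).indicator (fun _ => 2 ^ n * (volume (ball x ρ.rOut))⁻¹) y := by
  by_cases hy : y ∈ ball x ρ.rOut
  · have hball : volume (closedBall (0 : Euc n) ρ.rOut) = volume (ball x ρ.rOut) := by
      rw [Measure.addHaar_closedBall _ _ ρ.rOut_pos.le, Measure.addHaar_ball_of_pos _ x ρ.rOut_pos]
    have hpos : 0 < volume.real (closedBall (0 : Euc n) ρ.rOut) :=
      ENNReal.toReal_pos (measure_closedBall_pos _ _ ρ.rOut_pos).ne' measure_closedBall_lt_top.ne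
    have h := ENNReal.ofReal_le_ofReal
      (ρ.normed_le_div_measure_closedBall_rOut volume 2 hρ (x - y))
    rw [ENNReal.ofReal_div_of_pos hpos, ENNReal.ofReal_pow zero_le_two, finrank_euclideanSpace_fin,
      ofReal_measureReal measure_closedBall_lt_top.ne, hball, ENNReal.ofReal_ofNat] at h
    rwa [indicator_of_mem hy, Real.enorm_of_nonneg (ρ.nonneg_normed _), ← div_eq_mul_inv]
  · have hzero : ρ.normed volume (x - y) = 0 := by
      rw [← Function.notMem_support, ρ.support_normed_eq]
      simpa [dist_eq_norm, norm_sub_rev] using hy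
    simp [hzero]

theorem enorm_mollify_le (hρ : ρ.rOut ≤ 2 * ρ.rIn) (hU : MeasurableSet U) {H : Euc n → ℝ≥0∞}
    (hgH : ∀ᵐ y ∂volume.restrict U, ‖g y‖ₑ ≤ H y) (x : Euc n) :
    ‖mollify ρ U g x‖ₑ ≤ 2 ^ n * ⨍⁻ y in ball x ρ.rOut, H y ∂volume := by
  set c : ℝ≥0∞ := 2 ^ n * (volume (ball x ρ.rOut))⁻¹ with hc
  have hc_top : c ≠ ⊤ :=
    ENNReal.mul_ne_top (by simp) (ENNReal.inv_ne_top.2 (measure_ball_pos _ x ρ.rOut_pos).ne')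
  rw [mollify, convolution_lsmul_indicator hU]
  calc ‖∫ y in U, ρ.normed volume (x - y) * g y‖ₑ
      ≤ ∫⁻ y in U, ‖ρ.normed volume (x - y) * g y‖ₑ := enorm_integral_le_lintegral_enorm _
    _ ≤ ∫⁻ y in U, (ball x ρ.rOut).indicator (fun z => c * H z) y := by
        refine lintegral_mono_ae (hgH.mono fun y hy => ?_)
        rw [enorm_mul, indicator_mul_left (g := H)]
        exact mul_le_mul' (enorm_normed_le_indicator_ball hρ x y) hy
    _ ≤ ∫⁻ y in ball x ρ.rOut, c * H y := by
        rw [← lintegral_indicator measurableSet_ball]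
        exact setLIntegral_le_lintegral _ _
    _ = 2 ^ n * ⨍⁻ y in ball x ρ.rOut, H y ∂volume := by
        rw [lintegral_const_mul' _ _ hc_top, hc, mul_assoc, setLAverage_eq, ENNReal.div_eq_inv_mul]

end Mollification

section SobolevMajorant

/-- `H` dominates weak derivatives of `f` of every order `≤ k` almost everywhere on `U`. -/
def IsSobolevMajorantOn {n : ℕ} (k : ℕ) (U : Set (Euc n)) (f : Euc n → ℝ) (H : Euc n → ℝ≥0∞) :
    Prop :=
  ∀ α : Fin n → ℕ, mdeg α ≤ k →
    ∃ g, IsWeakDerivOn U α f g ∧ ∀ᵐ y ∂volume.restrict U, ‖g y‖ₑ ≤ H y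

variable {n k : ℕ} {U : Set (Euc n)} {f : Euc n → ℝ} {H : Euc n → ℝ≥0∞} {ζ : Euc n → ℝ}

lemma IsSobolevMajorantOn.enorm_iteratedFDeriv_mollify_le (h : IsSobolevMajorantOn k U f H)
    (hU : MeasurableSet U) (hf : IntegrableOn f U) {ρ : ContDiffBump (0 : Euc n)}
    (hρ : ρ.rOut ≤ 2 * ρ.rIn) {j : ℕ} (hj : j ≤ k) {x : Euc n} (hx : closedBall x ρ.rOut ⊆ U) :
    ‖iteratedFDeriv ℝ j (mollify ρ U f) x‖ₑ ≤
      n ^ j * (2 ^ n * ⨍⁻ y in ball x ρ.rOut, H y ∂volume) := by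
  calc ‖iteratedFDeriv ℝ j (mollify ρ U f) x‖ₑ
      ≤ ∑ r : Fin j → Fin n, ‖listDeriv (List.ofFn r) (mollify ρ U f) x‖ₑ :=
        enorm_iteratedFDeriv_le_sum_listDeriv (contDiff_mollify hU hf) j x
    _ ≤ ∑ _r : Fin j → Fin n, 2 ^ n * ⨍⁻ y in ball x ρ.rOut, H y ∂volume := by
        refine Finset.sum_le_sum fun r _ => ?_
        obtain ⟨g, hg, hgH⟩ := h (fun i => (List.ofFn r).count i)
          (by rwa [mdeg_count, List.length_ofFn])
        rw [listDeriv_mollify hU hf hg hx]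
        exact enorm_mollify_le hρ hU hgH x
    _ = n ^ j * (2 ^ n * ⨍⁻ y in ball x ρ.rOut, H y ∂volume) := by simp

lemma IsSobolevMajorantOn.exists_enorm_iteratedFDeriv_smul_mollify_le
    (h : IsSobolevMajorantOn k U f H) (hU : MeasurableSet U) (hf : IntegrableOn f U)
    (hζ : ContDiff ℝ (⊤ : ℕ∞) ζ) (hζc : HasCompactSupport ζ) :
    ∃ D : ℝ≥0, ∀ ρ : ContDiffBump (0 : Euc n), ρ.rOut ≤ 2 * ρ.rIn →
      cthickening ρ.rOut (tsupport ζ) ⊆ U → ∀ x,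
      ‖iteratedFDeriv ℝ k (fun y => ζ y • mollify ρ U f y) x‖ₑ ≤
        D * ⨍⁻ y in ball x ρ.rOut, H y ∂volume := by
  obtain ⟨B, hB⟩ := exists_enorm_iteratedFDeriv_smul_le (G := ℝ)
    (hζ.of_le (m := k) (by exact_mod_cast le_top)) hζc
  refine ⟨B * ∑ j ∈ Finset.range (k + 1), n ^ j * 2 ^ n, fun ρ hρ hρU x => ?_⟩
  by_cases hx : x ∈ tsupport ζ
  · refine (hB _ ((contDiff_mollify hU hf).of_le (by exact_mod_cast le_top)) x).trans ?_
    push_cast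
    rw [mul_assoc, Finset.sum_mul]
    gcongr with j hj
    rw [mul_assoc]
    exact h.enorm_iteratedFDeriv_mollify_le hU hf hρ (Nat.lt_succ_iff.1 (Finset.mem_range.1 hj))
      ((closedBall_subset_cthickening hx _).trans hρU)
  · rw [iteratedFDeriv_smul_eq_zero_of_notMem_tsupport k _ hx]
    simp

variable [Nontrivial (Euc n)] {m : ℕ}

theorem IsSobolevMajorantOn.exists_isHajlaszGradientOn_smul_mollify (hm : m + 1 ≤ n)
    (h : IsSobolevMajorantOn (m + 2) U f H) (hU : MeasurableSet U) (hf : IntegrableOn f U)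
    (hH : Measurable H) (hζ : ContDiff ℝ (⊤ : ℕ∞) ζ) (hζc : HasCompactSupport ζ) :
    ∃ M : ℝ≥0, ∀ ρ : ContDiffBump (0 : Euc n), ρ.rOut ≤ 2 * ρ.rIn →
      cthickening ρ.rOut (tsupport ζ) ⊆ U →
      IsHajlaszGradientOn (fun x => M * rieszPotential volume (m + 1) H x)
        (fun y => ζ y • mollify ρ U f y) univ := by
  obtain ⟨D, hD⟩ := h.exists_enorm_iteratedFDeriv_smul_mollify_le hU hf hζ hζc
  obtain ⟨A, hA⟩ := exists_isA1Weight_rieszPotential (volume : Measure (Euc n))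
    (a := m + 1) (by positivity) (by rw [finrank_euclideanSpace_fin]; exact_mod_cast hm)
  have hP := hA H hH
  obtain ⟨c, hc⟩ : ∃ c : ℝ≥0, (c : ℝ≥0∞) =
      ((finrank ℝ (Euc n) : ℝ≥0∞) * volume (ball (0 : Euc n) 1))⁻¹ * (m ! : ℝ≥0∞)⁻¹ := by
    refine ⟨_, ENNReal.coe_toNNReal (ENNReal.mul_ne_top (ENNReal.inv_ne_top.2 (mul_ne_zero ?_ ?_))
      (ENNReal.inv_ne_top.2 (by exact_mod_cast m.factorial_ne_zero)))⟩
    · exact_mod_cast finrank_pos.ne'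
    · exact (measure_ball_pos _ _ one_pos).ne'
  refine ⟨2 ^ n * (A * (c * (D * A))), fun ρ hρ hρU => ?_⟩
  have hu : ContDiff ℝ (⊤ : ℕ∞) fun y => ζ y • mollify ρ U f y :=
    hζ.smul (contDiff_mollify hU hf)
  have hgrad (x : Euc n) : ‖fderiv ℝ (fun y => ζ y • mollify ρ U f y) x‖ₑ ≤
      (c * (D * A) : ℝ≥0) * rieszPotential volume (m + 1) H x := by
    refine (enorm_fderiv_le_rieszPotential_iteratedFDeriv volume m
      (mod_cast contDiff_infty.1 hu (m + 2)) hζc.smul_right x).trans ?_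
    rw [← hc]
    push_cast
    rw [mul_assoc, mul_assoc]
    gcongr
    refine (rieszPotential_mono_ae _ (.of_forall (hD ρ hρ hρU)) x).trans ?_
    rw [rieszPotential_const_mul, rieszPotential_laverage_ball volume _ hH]
    gcongr
    exact hP.laverage_ball_le x ρ.rOut_pos
  have hmean := (hP.const_mul (c * (D * A) : ℝ≥0)).laverage_ball_enorm_sub_le
    (hu.of_le (by exact_mod_cast le_top)) hgrad
  have hHajlasz := isHajlaszGradientOn_of_laverage_ball_le
    hu.continuous.aestronglyMeasurable fun x r hr => hmean x hr
  simpa only [finrank_euclideanSpace_fin, ENNReal.coe_mul, ENNReal.coe_pow, ENNReal.coe_ofNat,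
    mul_assoc] using hHajlasz

lemma exists_seq_contDiffBump {E : Type*} [NormedAddCommGroup E] (c : E) :
    ∃ ρ : ℕ → ContDiffBump c, (∀ i, (ρ i).rOut ≤ 2 * (ρ i).rIn) ∧
      Tendsto (fun i => (ρ i).rOut) atTop (𝓝 0) := by
  refine ⟨fun i => ⟨1 / ((i : ℝ) + 1) / 2, 1 / ((i : ℝ) + 1), by positivity,
    half_lt_self (by positivity)⟩, fun i => ?_, tendsto_one_div_add_atTop_nhds_zero_nat⟩
  exact (mul_div_cancel₀ _ two_ne_zero).ge

theorem IsSobolevMajorantOn.exists_isHajlaszGradientOn (hm : m + 1 ≤ n)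
    (h : IsSobolevMajorantOn (m + 2) U f H) (hU : MeasurableSet U) (hf : IntegrableOn f U)
    (hH : Measurable H) (hζ : ContDiff ℝ (⊤ : ℕ∞) ζ) (hζc : HasCompactSupport ζ) {δ : ℝ}
    (hδ : 0 < δ) (hδU : cthickening δ (tsupport ζ) ⊆ U) :
    ∃ M : ℝ≥0, ∃ S : Set (Euc n), (∀ᵐ y, ζ y = 1 → y ∈ S) ∧
      IsHajlaszGradientOn (fun x => M * rieszPotential volume (m + 1) H x) f S := by
  obtain ⟨M, hM⟩ := h.exists_isHajlaszGradientOn_smul_mollify hm hU hf hH hζ hζc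
  obtain ⟨ρ, hρ, hρ0⟩ := exists_seq_contDiffBump (0 : Euc n)
  have hconv := ContDiffBump.ae_convolution_tendsto_right_of_locallyIntegrable (μ := volume) hρ0
    (.of_forall hρ) (locallyIntegrable_indicator hU hf)
  refine ⟨M, {y | ζ y = 1 ∧ Tendsto (fun i => mollify (ρ i) U f y) atTop (𝓝 (U.indicator f y))},
    hconv.mono fun y hy hζy => ⟨hζy, hy⟩, ?_⟩
  refine .of_tendsto (l := atTop) (u := fun i y => ζ y • mollify (ρ i) U f y) ?_ ?_
  · filter_upwards [hρ0.eventually_le_const hδ] with i hi x _ y _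
    exact hM (ρ i) (hρ i) ((cthickening_mono hi _).trans hδU) x (mem_univ x) y (mem_univ y)
  · rintro y ⟨hζy, hy⟩
    have hyU : y ∈ U := hδU (self_subset_cthickening _ (subset_tsupport _ (by simp [hζy])))
    simpa only [hζy, one_smul, indicator_of_mem hyU] using hy

lemma exists_contDiff_eqOn_one_thickening {E : Type*} [NormedAddCommGroup E]
    [InnerProductSpace ℝ E] [FiniteDimensional ℝ E] {K U : Set E} (hK : IsCompact K)
    (hU : IsOpen U) (hKU : K ⊆ U) :
    ∃ δ > 0, ∃ ζ : E → ℝ, ContDiff ℝ (⊤ : ℕ∞) ζ ∧ HasCompactSupport ζ ∧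
      EqOn ζ 1 (thickening δ K) ∧ cthickening δ (tsupport ζ) ⊆ U := by
  obtain ⟨L, hL, hKL, hLU⟩ := exists_compact_between hK hU hKU
  obtain ⟨ζ, hζ1, hζL, -⟩ := exists_contMDiffMap_one_nhds_of_subset_interior
    (n := (⊤ : ℕ∞)) (modelWithCornersSelf ℝ E) hK.isClosed hKL
  have hζ_tsupport : tsupport ζ ⊆ L := closure_minimal
    (fun x hx => by_contra fun hxL => hx (hζL x hxL)) hL.isClosed
  obtain ⟨δ, hδ, hδK⟩ := (hasBasis_nhdsSet_thickening hK).mem_iff.1 hζ1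
  obtain ⟨δ', hδ', hδL⟩ := hL.exists_cthickening_subset_open hU hLU
  refine ⟨min δ δ', lt_min hδ hδ', ζ, ζ.contMDiff.contDiff, hL.of_isClosed_subset
    (isClosed_tsupport ζ) hζ_tsupport, fun x hx => hδK (thickening_mono (min_le_left _ _) K hx), ?_⟩
  exact (cthickening_subset_of_subset _ hζ_tsupport).trans
    ((cthickening_mono (min_le_right _ _) L).trans hδL)

theorem IsSobolevMajorantOn.exists_lipschitzOnWith_preciseRep (hm : m + 1 ≤ n)
    (h : IsSobolevMajorantOn (m + 2) U f H) (hU : IsOpen U) (hf : IntegrableOn f U)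
    (hH : Measurable H) {K : Set (Euc n)} (hK : IsCompact K) (hKU : K ⊆ U) (N : ℝ≥0) :
    ∃ L, LipschitzOnWith L (preciseRep f) (K ∩ {x | rieszPotential volume (m + 1) H x ≤ N}) := by
  obtain ⟨δ, hδ, ζ, hζ, hζc, hζ1, hδU⟩ := exists_contDiff_eqOn_one_thickening hK hU hKU
  obtain ⟨M, S, hS, hHajlasz⟩ :=
    h.exists_isHajlaszGradientOn hm hU.measurableSet hf hH hζ hζc hδ hδU
  obtain ⟨A, hA⟩ := exists_isA1Weight_rieszPotential (volume : Measure (Euc n))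
    (a := m + 1) (by positivity) (by rw [finrank_euclideanSpace_fin]; exact_mod_cast hm)
  have hδKU : thickening δ K ⊆ U := fun x hx =>
    hδU (self_subset_cthickening _ (subset_tsupport ζ (by simp [hζ1 hx])))
  refine ⟨_, (hHajlasz.lipschitzOnWith_preciseRepV ((hA H hH).const_mul M) (K := K) hδ
    (fun x hx => hf.mono_set ((ball_subset_thickening hx δ).trans hδKU))
    (hS.mono fun y hy hyK => hy (hζ1 hyK)) (M * N)).mono
    (inter_subset_inter_right K fun x hx => ?_)⟩
  rw [mem_ofPred_eq] at hx ⊢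
  push_cast
  gcongr

end SobolevMajorant

section RieszCapacity

variable {n : ℕ} {a p : ℝ}

lemma rieszPot_eq_mul_rieszPotential [Nontrivial (Euc n)] (a : ℝ) (g : Euc n → ℝ) (x : Euc n) :
    rieszPot a g x = (ENNReal.ofReal (rieszGamma n a))⁻¹ *
      rieszPotential volume a (fun y => ENNReal.ofReal (g y)) x := by
  rw [rieszPot, rieszPotential]
  congr 1
  refine lintegral_congr_ae ?_
  filter_upwards [(Measure.measurePreserving_sub_left volume x).quasiMeasurePreserving.ae
    (rieszKernel_eq_ofReal_ae volume a)] with y hy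
  rw [hy, finrank_euclideanSpace_fin]

theorem rieszCap_eq_zero_of_rieszPotential_eq_top [Nontrivial (Euc n)] (hp : 0 < p) {h : Euc n → ℝ}
    (hh : MemLp h (ENNReal.ofReal p) volume) {S : Set (Euc n)}
    (hS : ∀ x ∈ S, rieszPotential volume a (fun y => ‖h y‖ₑ) x = ⊤) : rieszCap a p S = 0 := by
  have hJ : ∫⁻ y, ‖h y‖ₑ ^ p ≠ ⊤ := by
    simpa only [ENNReal.toReal_ofReal hp.le] using (lintegral_rpow_enorm_lt_top_of_eLpNorm_lt_top
      (ENNReal.ofReal_pos.2 hp).ne' ENNReal.ofReal_ne_top hh.2).ne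
  have hmul (ε : ℝ≥0) (y : Euc n) : ENNReal.ofReal (ε * ‖h y‖) = ε * ‖h y‖ₑ := by
    rw [ENNReal.ofReal_mul ε.coe_nonneg, ENNReal.ofReal_coe_nnreal, ofReal_norm]
  have hle (ε : ℝ≥0) (hε : 0 < ε) : rieszCap a p S ≤ (ε : ℝ≥0∞) ^ p * ∫⁻ y, ‖h y‖ₑ ^ p := by
    have hcap (x) (hx : x ∈ S) : 1 ≤ rieszPot a (fun y => ε * ‖h y‖) x := by
      simp only [rieszPot_eq_mul_rieszPotential, hmul, rieszPotential_const_mul, hS x hx]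
      rw [ENNReal.mul_top (ENNReal.coe_ne_zero.2 hε.ne'),
        ENNReal.mul_top (ENNReal.inv_ne_zero.2 ENNReal.ofReal_ne_top)]
      exact le_top
    refine (iInf₂_le (fun y => ε * ‖h y‖)
      ⟨hh.norm.const_mul (ε : ℝ), fun y => by positivity, hcap⟩).trans_eq ?_
    simp only [hmul, ENNReal.mul_rpow_of_nonneg _ _ hp.le]
    exact lintegral_const_mul' _ _ (ENNReal.rpow_ne_top_of_nonneg hp.le ENNReal.coe_ne_top)
  have hlim : Tendsto (fun ε : ℝ≥0 => (ε : ℝ≥0∞) ^ p * ∫⁻ y, ‖h y‖ₑ ^ p) (𝓝[>] 0) (𝓝 0) := by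
    have hcont : Continuous fun ε : ℝ≥0 => (ε : ℝ≥0∞) ^ p * ∫⁻ y, ‖h y‖ₑ ^ p :=
      (ENNReal.continuous_mul_const hJ).comp
        (ENNReal.continuous_rpow_const.comp ENNReal.continuous_coe)
    simpa [ENNReal.zero_rpow_of_pos hp] using (hcont.tendsto 0).mono_left nhdsWithin_le_nhds
  exact nonpos_iff_eq_zero.1
    (ge_of_tendsto hlim (eventually_mem_nhdsWithin.mono fun ε hε => hle ε hε))

lemma rieszCap_empty (hp : 0 < p) : rieszCap a p (∅ : Set (Euc n)) = 0 := by
  refine nonpos_iff_eq_zero.1 ((iInf₂_le (fun _ => 0) ⟨MemLp.zero', by simp, by simp⟩).trans_eq ?_)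
  simp [ENNReal.zero_rpow_of_pos hp]

end RieszCapacity

section CommonMajorant

lemma exists_memLp_forall_enorm_le {α F ι : Type*} [MeasurableSpace α] {μ : Measure α}
    [NormedAddCommGroup F] [Countable ι] {q : ℝ≥0∞} (hq : 1 ≤ q) {H : ι → α → F}
    (hH : ∀ i, MemLp (H i) q μ) :
    ∃ h : α → ℝ, Measurable h ∧ MemLp h q μ ∧
      ∀ i, ∃ c : ℝ≥0, ∀ᵐ y ∂μ, ‖H i y‖ₑ ≤ c * ‖h y‖ₑ := by
  have : Fact (1 ≤ q) := ⟨hq⟩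
  obtain ⟨w, hw, s, hws, -⟩ := NNReal.exists_pos_sum_of_countable one_ne_zero ι
  let u (i : ι) : Lp ℝ q μ := (hH i).norm.toLp _
  let c (i : ι) : ℝ≥0 := w i / (1 + ‖u i‖₊)
  have hc (i : ι) : 0 < c i := div_pos (hw i) (by positivity)
  have hcu (i : ι) : ((c i : ℝ) • u i : Lp ℝ q μ) =ᵐ[μ] fun y => c i * ‖H i y‖ := by
    filter_upwards [Lp.coeFn_smul (c i : ℝ) (u i), (hH i).norm.coeFn_toLp] with y hsmul hy
    rw [hsmul, Pi.smul_apply, hy, smul_eq_mul]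
  have hcu_nonneg (i : ι) : 0 ≤ (c i : ℝ) • u i := by
    rw [← Lp.coeFn_nonneg]
    filter_upwards [hcu i] with y hy
    rw [hy]
    exact mul_nonneg (c i).coe_nonneg (norm_nonneg _)
  have hsum : Summable fun i => (c i : ℝ) • u i := by
    refine .of_norm_bounded (NNReal.summable_coe.2 hws.summable) fun i => ?_
    rw [← coe_nnnorm, NNReal.coe_le_coe, nnnorm_smul, NNReal.nnnorm_eq, div_mul_eq_mul_div]
    exact div_le_of_le_mul₀ (by positivity) (by positivity) (by gcongr; exact le_add_self)
  refine ⟨_, (Lp.stronglyMeasurable (∑' i, (c i : ℝ) • u i)).measurable, Lp.memLp _,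
    fun i => ⟨(c i)⁻¹, ?_⟩⟩
  filter_upwards [(Lp.coeFn_le _ _).2 (hsum.le_tsum i fun j _ => hcu_nonneg j), hcu i]
    with y hle hy
  rw [hy, ← le_inv_mul_iff₀ (NNReal.coe_pos.2 (hc i))] at hle
  rw [← ENNReal.ofReal_coe_nnreal, ← ofReal_norm, ← ofReal_norm, ← ENNReal.ofReal_mul (by simp)]
  refine ENNReal.ofReal_le_ofReal (hle.trans ?_)
  rw [NNReal.coe_inv]
  gcongr
  exact le_abs_self _

variable {n k : ℕ} {p : ℝ} {f : Euc n → ℝ}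

lemma MemSobolevOn.integrableOn {U : Set (Euc n)} (hf : MemSobolevOn k p U f) (hp : 1 ≤ p)
    (hU : volume U ≠ ⊤) : IntegrableOn f U :=
  have := isFiniteMeasure_restrict.2 hU
  hf.1.integrable (ENNReal.one_le_ofReal.2 hp)

lemma finite_setOf_mdeg_le (n k : ℕ) : {α : Fin n → ℕ | mdeg α ≤ k}.Finite :=
  (finite_Iic fun _ => k).subset fun _ hα i =>
    (Finset.single_le_sum (fun _ _ => Nat.zero_le _) (Finset.mem_univ i)).trans hα

theorem exists_isSobolevMajorantOn_of_memSobolevOn {ι : Type*} [Countable ι] (hp : 1 ≤ p)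
    {U : ι → Set (Euc n)} (hU : ∀ i, MeasurableSet (U i)) (hf : ∀ i, MemSobolevOn k p (U i) f) :
    ∃ h : Euc n → ℝ, Measurable h ∧ MemLp h (ENNReal.ofReal p) volume ∧
      ∀ i, ∃ c : ℝ≥0, IsSobolevMajorantOn k (U i) f fun y => c * ‖h y‖ₑ := by
  choose g hg hgf using fun i => (hf i).2
  have : Finite {α : Fin n → ℕ // mdeg α ≤ k} := finite_setOf_mdeg_le n k
  obtain ⟨h, hm, hLp, hle⟩ := exists_memLp_forall_enorm_le (ENNReal.one_le_ofReal.2 hp)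
    (H := fun (j : ι × {α : Fin n → ℕ // mdeg α ≤ k}) => (U j.1).indicator (g j.1 j.2 j.2.2))
    fun j => (memLp_indicator_iff_restrict (hU j.1)).2 (hg j.1 j.2 j.2.2)
  choose c hc using hle
  refine ⟨h, hm, hLp, fun i => ?_⟩
  obtain ⟨M, hM⟩ := Finite.bddAbove_range fun α : {α : Fin n → ℕ // mdeg α ≤ k} => c (i, α)
  refine ⟨M, fun α hα => ⟨g i α hα, hgf i α hα, ?_⟩⟩
  filter_upwards [ae_restrict_of_ae (hc (i, ⟨α, hα⟩)), ae_restrict_mem (hU i)] with y hy hyU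
  rw [indicator_of_mem hyU] at hy
  refine hy.trans ?_
  gcongr
  exact hM ⟨⟨α, hα⟩, rfl⟩

end CommonMajorant

section LipschitzApproximation

lemma exists_monotone_isCompact_iUnion_eq {X : Type*} [TopologicalSpace X] [LocallyCompactSpace X]
    [SecondCountableTopology X] {Ω : Set X} (hΩ : IsOpen Ω) :
    ∃ K : ℕ → Set X, Monotone K ∧ (∀ l, IsCompact (K l)) ∧ ⋃ l, K l = Ω := by
  have : LocallyCompactSpace Ω := hΩ.locallyCompactSpace
  let K : CompactExhaustion Ω := default
  refine ⟨fun l => (↑) '' K l, fun i j hij => image_mono (K.subset hij),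
    fun l => (K.isCompact l).image continuous_subtype_val, ?_⟩
  rw [← image_iUnion, K.iUnion_eq, image_univ, Subtype.range_coe]

theorem lipschitz_approximation_riesz_general {n k : ℕ} {p : ℝ} (hk : 1 < k) (hkn : k ≤ n)
    (hp : 1 ≤ p) {Ω : Set (Euc n)} (hΩ : IsOpen Ω) {f : Euc n → ℝ} (hf : MemSobolevLoc k p Ω f) :
    ∃ C : ℕ → Set (Euc n),
      (∀ l, IsClosed (C l)) ∧ (∀ l, C l ⊆ C (l + 1)) ∧ (∀ l, C l ⊆ Ω) ∧
      (∀ l, ∃ L : ℝ≥0, LipschitzOnWith L (preciseRep f) (C l)) ∧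
      rieszCap ((k : ℝ) - 1) p (Ω \ ⋃ l, C l) = 0 := by
  obtain ⟨m, rfl⟩ := Nat.exists_eq_add_of_le' hk
  rw [show ((m + 2 : ℕ) : ℝ) - 1 = m + 1 by push_cast; ring]
  have : Nonempty (Fin n) := ⟨⟨0, by omega⟩⟩
  obtain ⟨K, hKmono, hK, rfl⟩ := exists_monotone_isCompact_iUnion_eq hΩ
  choose U hU hKU hUK hU_compact using fun l =>
    exists_open_between_and_isCompact_closure (hK l) hΩ (subset_iUnion K l)
  have hfU (l : ℕ) : MemSobolevOn (m + 2) p (U l) f :=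
    hf (U l) (hU l) ((hU_compact l).isBounded.subset subset_closure) (hUK l)
  obtain ⟨h, hm, hLp, hmaj⟩ :=
    exists_isSobolevMajorantOn_of_memSobolevOn hp (fun l => (hU l).measurableSet) hfU
  let P := rieszPotential volume ((m : ℝ) + 1) fun y => ‖h y‖ₑ
  refine ⟨fun l => K l ∩ {x | P x ≤ l}, fun l => ?_, fun l => ?_, fun l => ?_, fun l => ?_, ?_⟩
  · exact (hK l).isClosed.inter (isClosed_rieszPotential_le _ _ hm.enorm (by simp) _)
  · exact inter_subset_inter (hKmono l.le_succ) fun x hx =>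
      (show P x ≤ l from hx).trans (by exact_mod_cast l.le_succ)
  · exact inter_subset_left.trans (subset_iUnion K l)
  · obtain ⟨c, hc⟩ := hmaj l
    have hU_top : volume (U l) ≠ ⊤ :=
      ((measure_mono subset_closure).trans_lt (hU_compact l).measure_lt_top).ne
    obtain ⟨L, hL⟩ := hc.exists_lipschitzOnWith_preciseRep (by omega) (hU l)
      ((hfU l).integrableOn hp hU_top) (hm.enorm.const_mul _) (hK l) (hKU l) (c * l)
    refine ⟨L, hL.mono (inter_subset_inter_right _ fun x hx => ?_)⟩
    rw [mem_ofPred_eq, rieszPotential_const_mul]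
    push_cast
    gcongr
    exact hx
  · refine rieszCap_eq_zero_of_rieszPotential_eq_top (by positivity) hLp fun x hx => ?_
    obtain ⟨i, hi⟩ := mem_iUnion.1 hx.1
    by_contra hPx
    obtain ⟨N, hN⟩ := ENNReal.exists_nat_gt hPx
    refine hx.2 (mem_iUnion.2 ⟨max i N, hKmono (le_max_left i N) hi, ?_⟩)
    exact hN.le.trans (by exact_mod_cast le_max_right i N)

end LipschitzApproximation

end

/-- Theorem 1.3, Lipschitz approximation up to sets of small Riesz capacity. -/
theorem lipschitz_approximation_riesz {n k : ℕ} {p : ℝ}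
    (hk : 1 < k) (hp : 1 ≤ p) (hkpn : ((k : ℝ) - 1) * p < n)
    (Ω : Set (Euc n)) (hΩ : IsOpen Ω)
    (f : Euc n → ℝ) (hf : MemSobolevLoc k p Ω f) :
    ∃ C : ℕ → Set (Euc n),
      (∀ l, IsClosed (C l)) ∧ (∀ l, C l ⊆ C (l + 1)) ∧ (∀ l, C l ⊆ Ω) ∧
      (∀ l, ∃ Θ ⊆ C l, rieszCap ((k : ℝ) - 1) p Θ = 0 ∧
        ∃ K : ℝ≥0, LipschitzOnWith K (preciseRep f) (C l \ Θ)) ∧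
      rieszCap ((k : ℝ) - 1) p (Ω \ ⋃ l, C l) = 0 := by
  have hkn : k ≤ n := by
    have : (k : ℝ) < n + 1 := by nlinarith [show (1 : ℝ) < k by exact_mod_cast hk]
    exact Nat.lt_succ_iff.1 (by exact_mod_cast this)
  obtain ⟨C, hC_closed, hC_mono, hCΩ, hC_lip, hC_cap⟩ :=
    lipschitz_approximation_riesz_general hk hkn hp hΩ hf
  exact ⟨C, hC_closed, hC_mono, hCΩ, fun l => ⟨∅, empty_subset _, rieszCap_empty (by positivity),
    by simpa only [sdiff_empty] using hC_lip l⟩, hC_cap⟩
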